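/- arXiv:1302.4285 — 4 statements merged into one kernel-verified Lean document; each statement's English description precedes it below -/
import Mathlib

section
/- For all positive integers a, b, c, d, the value ζ₂(2a, b, b, 2c−1, d, d; G₂) belongs to the ℚ-subalgebra of ℝ generated by the Riemann zeta values {ζ(j) : j an integer, j ≥ 2}. -/
/-- The zeta-function of the root system `G₂` at a tuple of natural number exponents:
`ζ₂(s₁,…,s₆;G₂) = ∑_{m,n≥1} 1/(m^{s₁} n^{s₂} (m+n)^{s₃} (m+2n)^{s₄} (m+3n)^{s₅} (2m+3n)^{s₆})`. -/
noncomputable def zetaG2 (s₁ s₂ s₃ s₄ s₅ s₆ : ℕ) : ℝ :=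
  ∑' (m : ℕ+) (n : ℕ+),
    1 / (((m : ℕ) : ℝ) ^ s₁ * ((n : ℕ) : ℝ) ^ s₂ * (((m : ℕ) : ℝ) + ((n : ℕ) : ℝ)) ^ s₃ *
      (((m : ℕ) : ℝ) + 2 * ((n : ℕ) : ℝ)) ^ s₄ * (((m : ℕ) : ℝ) + 3 * ((n : ℕ) : ℝ)) ^ s₅ *
      (2 * ((m : ℕ) : ℝ) + 3 * ((n : ℕ) : ℝ)) ^ s₆)


/-- The real values of the Riemann zeta function at integers `j ≥ 2`. -/
def zetaValues : Set ℝ := {x : ℝ | ∃ j : ℕ, 2 ≤ j ∧ (x : ℂ) = riemannZeta j}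

/-!
The quadratic forms `M = m²`, `P = n(m + n)`, `Q = (m + 3n)(2m + 3n)` and `Z = (m + 2n)²` span a
two-dimensional space, so for any two `X`, `Y` of the forms `M`, `P`, `Q` the product `1 / (X Y)`
is a rational combination of `1 / (X Z)` and `1 / (Y Z)`. Partial fractions therefore reduce the
series to double series in which only one of `M`, `P`, `Q` occurs next to an odd power of `m + 2n`.

For `P` and `Q`, substituting `(m, n) ↦ (n, m + n)` turns such a series into half of a symmetric
double series, up to its diagonal. A further partial fraction in linear forms leads in all cases to
Euler sums `∑ e ^ n H_j(n) / n ^ p` with `e = ±1` and odd weight `p + j`. These are evaluated by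
summing `e ^ k / k ^ p * (1 / (m - k) ^ j - 1 / m ^ j) / k` over `(m, k) ∈ ℕ × ℤ` in both orders:
the sums over `k` reduce to zeta values, and the sums over `m` telescope to Euler sums.
-/

open Filter Topology

section HasSumIn

variable {α β : Type*}

/-- The family `f` is summable and its sum lies in the subalgebra `A` of `ℝ`. -/
def HasSumIn (A : Subalgebra ℚ ℝ) (f : α → ℝ) : Prop := ∃ x ∈ A, HasSum f x

namespace HasSumIn

variable {A : Subalgebra ℚ ℝ} {f g : α → ℝ}

theorem summable (hf : HasSumIn A f) : Summable f :=
  let ⟨_, _, hx⟩ := hf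
  hx.summable

theorem tsum_mem (hf : HasSumIn A f) : ∑' a, f a ∈ A := by
  obtain ⟨x, hxA, hx⟩ := hf
  rwa [hx.tsum_eq]

theorem congr (hf : HasSumIn A f) (h : ∀ a, g a = f a) : HasSumIn A g := by
  rwa [funext h]

theorem add (hf : HasSumIn A f) (hg : HasSumIn A g) : HasSumIn A fun a => f a + g a := by
  obtain ⟨x, hxA, hx⟩ := hf
  obtain ⟨y, hyA, hy⟩ := hg
  exact ⟨x + y, add_mem hxA hyA, hx.add hy⟩

theorem mul_left (hf : HasSumIn A f) {c : ℝ} (hc : c ∈ A) : HasSumIn A fun a => c * f a := by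
  obtain ⟨x, hxA, hx⟩ := hf
  exact ⟨c * x, mul_mem hc hxA, hx.mul_left c⟩

theorem ratCast_mul (hf : HasSumIn A f) (q : ℚ) : HasSumIn A fun a => (q : ℝ) * f a :=
  hf.mul_left (A.algebraMap_mem q)

theorem sub (hf : HasSumIn A f) (hg : HasSumIn A g) : HasSumIn A fun a => f a - g a :=
  (hf.add (hg.ratCast_mul (-1))).congr fun a => by push_cast; ring

theorem sum {ι : Type*} {s : Finset ι} {F : ι → α → ℝ} (h : ∀ i ∈ s, HasSumIn A (F i)) :
    HasSumIn A fun a => ∑ i ∈ s, F i a := by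
  refine ⟨∑ i ∈ s, ∑' a, F i a, sum_mem fun i hi => (h i hi).tsum_mem, ?_⟩
  exact hasSum_sum fun i hi => (h i hi).summable.hasSum

theorem comp_injective {u : β → α} (hf : HasSumIn A f) (hu : Function.Injective u)
    (hsupp : ∀ a ∉ Set.range u, f a = 0) : HasSumIn A (f ∘ u) := by
  obtain ⟨x, hxA, hx⟩ := hf
  exact ⟨x, hxA, (hu.hasSum_iff hsupp).2 hx⟩

theorem prod_swap {F : α × β → ℝ} (hF : HasSumIn A F) : HasSumIn A (F ∘ Prod.swap) :=
  hF.comp_injective Prod.swap_injective fun p hp => absurd (Prod.swap_surjective p) hp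

theorem of_prod_fiberwise {F : α × β → ℝ} (hF : Summable F)
    (hg : ∀ a, HasSum (fun b => F (a, b)) (g a)) (h : HasSumIn A g) : HasSumIn A F := by
  obtain ⟨x, hxA, hx⟩ := h
  exact ⟨x, hxA, (hF.hasSum.prod_fiberwise hg).unique hx ▸ hF.hasSum⟩

theorem prod_fiberwise {F : α × β → ℝ} (hF : HasSumIn A F)
    (hg : ∀ a, HasSum (fun b => F (a, b)) (g a)) : HasSumIn A g := by
  obtain ⟨x, hxA, hx⟩ := hF
  exact ⟨x, hxA, hx.prod_fiberwise hg⟩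

theorem nat_add_neg {F : ℤ → ℝ} (hF : HasSumIn A F) (h0 : F 0 = 0) :
    HasSumIn A fun n : ℕ => F n + F (-n) := by
  obtain ⟨x, hxA, hx⟩ := hF
  exact ⟨x, hxA, by simpa [h0] using hx.nat_add_neg⟩

/-- Iterating `X Y = Z (c X + d Y)` reduces a monomial in `X`, `Y`, `Z` to monomials of the same
degree that lack either `X` or `Y`. -/
theorem of_mul_eq {W X Y Z : α → ℝ} {c d : ℚ} (h : ∀ a, X a * Y a = Z a * (c * X a + d * Y a)) :
    ∀ x y r : ℕ,
      (∀ i j, i ≤ x → i + j = x + y + r → HasSumIn A fun a => W a * (X a ^ i * Z a ^ j)) →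
      (∀ i j, i ≤ y → i + j = x + y + r → HasSumIn A fun a => W a * (Y a ^ i * Z a ^ j)) →
      HasSumIn A fun a => W a * (X a ^ x * Y a ^ y * Z a ^ r)
  | 0, y, r, _, hY => (hY y r le_rfl (by omega)).congr fun a => by ring
  | x + 1, 0, r, hX, _ => (hX (x + 1) r le_rfl (by omega)).congr fun a => by ring
  | x + 1, y + 1, r, hX, hY => by
    have hXY := of_mul_eq h (x + 1) y (r + 1) (fun i j hi hj => hX i j hi (by omega))
      fun i j hi hj => hY i j (by omega) (by omega)
    have hYX := of_mul_eq h x (y + 1) (r + 1) (fun i j hi hj => hX i j (by omega) (by omega))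
      fun i j hi hj => hY i j hi (by omega)
    refine ((hXY.ratCast_mul c).add (hYX.ratCast_mul d)).congr fun a => ?_
    linear_combination (W a * X a ^ x * Y a ^ y * Z a ^ r) * h a
  termination_by x y => x + y

end HasSumIn

end HasSumIn

namespace HasSumIn

variable {A : Subalgebra ℚ ℝ} {f : ℕ → ℝ}

theorem neg_one_pow_mul_iff (hf : HasSumIn A f) :
    HasSumIn A (fun n => (-1) ^ n * f n) ↔ HasSumIn A fun n => f (2 * n) := by
  have hinj : Function.Injective (2 * · : ℕ → ℕ) := mul_right_injective₀ two_ne_zero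
  have hodd : ∀ n ∉ Set.range (2 * · : ℕ → ℕ), ((1 + (-1) ^ n) / 2) * f n = 0 := fun n hn => by
    have : Odd n := Nat.not_even_iff_odd.1 fun ⟨k, hk⟩ => hn ⟨k, by grind⟩
    simp [this.neg_one_pow]
  constructor
  · intro h
    refine (((hf.add h).ratCast_mul (1 / 2)).comp_injective hinj fun n hn => ?_).congr fun n => ?_
    · rw [← hodd n hn]
      push_cast
      ring
    · simp [pow_mul]
      ring
  · rintro ⟨x, hxA, hx⟩
    have heven : HasSumIn A fun n => ((1 + (-1) ^ n) / 2) * f n :=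
      ⟨x, hxA, (hinj.hasSum_iff hodd).1 (by simpa [Function.comp_def, pow_mul] using hx)⟩
    refine ((heven.ratCast_mul 2).sub hf).congr fun n => ?_
    push_cast
    ring

end HasSumIn

/-- The `ℚ`-algebra generated by the zeta values. -/
noncomputable abbrev zetaAlgebra : Subalgebra ℚ ℝ := Algebra.adjoin ℚ zetaValues

theorem hasSumIn_inv_pow {s : ℕ} (hs : 2 ≤ s) :
    HasSumIn zetaAlgebra fun n : ℕ => (n : ℝ)⁻¹ ^ s := by
  have hsum : Summable fun n : ℕ => (n : ℝ)⁻¹ ^ s := by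
    simpa using (Real.summable_nat_pow_inv (p := s)).2 hs
  refine ⟨_, Algebra.subset_adjoin ⟨s, hs, ?_⟩, hsum.hasSum⟩
  rw [zeta_nat_eq_tsum_of_gt_one hs, Complex.ofReal_tsum]
  simp

theorem hasSumIn_sign_mul_inv_pow {e : ℝ} (he : |e| = 1) {s : ℕ} (hs : 2 ≤ s) :
    HasSumIn zetaAlgebra fun n : ℕ => e ^ n * (n : ℝ)⁻¹ ^ s := by
  rcases eq_or_eq_neg_of_abs_eq he with rfl | rfl
  · simpa using hasSumIn_inv_pow hs
  · refine (hasSumIn_inv_pow hs).neg_one_pow_mul_iff.2 ?_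
    refine ((hasSumIn_inv_pow hs).ratCast_mul (2⁻¹ ^ s)).congr fun n => ?_
    push_cast
    rw [mul_inv, mul_pow]

section Sign

variable {e : ℝ}

theorem inv_eq_self_of_abs_eq_one (he : |e| = 1) : e⁻¹ = e := by
  rcases eq_or_eq_neg_of_abs_eq he with rfl | rfl <;> norm_num

theorem abs_zpow_eq_one (he : |e| = 1) (k : ℤ) : |e ^ k| = 1 := by
  rw [abs_zpow, he, one_zpow]

theorem zpow_neg_eq_self (he : |e| = 1) (k : ℤ) : e ^ (-k) = e ^ k := by
  rw [zpow_neg, ← inv_zpow, inv_eq_self_of_abs_eq_one he]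

theorem zpow_mul_self_eq_one (he : |e| = 1) (k : ℤ) : e ^ k * e ^ k = 1 := by
  rw [← abs_mul_abs_self, abs_zpow_eq_one he, one_mul]

end Sign

section Summability

variable {e : ℝ}

theorem abs_inv_intCast_le_one (k : ℤ) : |(k : ℝ)⁻¹| ≤ 1 := by
  rcases eq_or_ne k 0 with rfl | hk
  · simp
  · rw [abs_inv]
    exact inv_le_one_of_one_le₀ (by exact_mod_cast Int.one_le_abs hk)

theorem abs_pow_mul_pow_le {x y : ℝ} (hx : |x| ≤ 1) (hy : |y| ≤ 1) {a b : ℕ} (hab : 2 ≤ a + b) :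
    |x ^ a * y ^ b| ≤ x ^ 2 + y ^ 2 := by
  set t := max |x| |y|
  have ht : 0 ≤ t := (abs_nonneg x).trans (le_max_left _ _)
  calc |x ^ a * y ^ b| = |x| ^ a * |y| ^ b := by rw [abs_mul, abs_pow, abs_pow]
    _ ≤ t ^ a * t ^ b := by gcongr <;> simp [t]
    _ = t ^ (a + b) := (pow_add ..).symm
    _ ≤ t ^ 2 := pow_le_pow_of_le_one ht (max_le hx hy) hab
    _ ≤ x ^ 2 + y ^ 2 := by
      rcases max_choice |x| |y| with h | h <;> simp only [t, h, sq_abs] <;> nlinarith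

-- AM-GM applied to `√|x y|`, `√|x z|`, `√|y z|`, whose product is `|x y z|`.
theorem abs_mul_mul_le (x y z : ℝ) :
    |x * y * z| ≤ (√|x| * √|y|) ^ 3 + (√|x| * √|z|) ^ 3 + (√|y| * √|z|) ^ 3 := by
  have amgm : ∀ {u v w : ℝ}, 0 ≤ u → 0 ≤ v → 0 ≤ w → u * v * w ≤ u ^ 3 + v ^ 3 + w ^ 3 := by
    intro u v w hu hv hw
    have huvw : 0 ≤ u + v + w := by positivity
    nlinarith [mul_nonneg huvw (sq_nonneg (u - v)), mul_nonneg huvw (sq_nonneg (u - w)),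
      mul_nonneg huvw (sq_nonneg (v - w)), mul_nonneg (mul_nonneg hu hv) hw]
  have hx := Real.sq_sqrt (abs_nonneg x)
  have hy := Real.sq_sqrt (abs_nonneg y)
  have hz := Real.sq_sqrt (abs_nonneg z)
  calc |x * y * z| = (√|x| * √|y|) * (√|x| * √|z|) * (√|y| * √|z|) := by
        rw [abs_mul, abs_mul, ← hx, ← hy, ← hz]
        simp only [Real.sqrt_sq (Real.sqrt_nonneg _)]
        ring
    _ ≤ _ := amgm (by positivity) (by positivity) (by positivity)

theorem summable_sqrt_abs_inv_pow_three : Summable fun k : ℤ => √|(k : ℝ)⁻¹| ^ 3 := by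
  refine (Real.summable_abs_int_rpow (b := 3 / 2) (by norm_num)).congr fun k => ?_
  rw [Real.sqrt_eq_rpow, ← Real.rpow_natCast, ← Real.rpow_mul (abs_nonneg _), abs_inv,
    Real.inv_rpow (abs_nonneg _), Real.rpow_neg (abs_nonneg _)]
  norm_num

theorem summable_sign_mul_inv_pow_mul_inv_pow (he : |e| = 1) (m : ℤ) {p j : ℕ} (hpj : 2 ≤ p + j) :
    Summable fun k : ℤ => e ^ k * ((k : ℝ)⁻¹ ^ p * ((m : ℝ) - k)⁻¹ ^ j) := by
  have hsq : Summable fun k : ℤ => (k : ℝ)⁻¹ ^ 2 := by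
    simpa using Real.summable_one_div_int_pow.2 one_lt_two
  have hsq' := hsq.comp_injective (Equiv.subLeft m).injective
  refine Summable.of_norm_bounded (hsq.add hsq') fun k => ?_
  rw [Real.norm_eq_abs, abs_mul, abs_zpow_eq_one he, one_mul]
  simpa using abs_pow_mul_pow_le (abs_inv_intCast_le_one k) (abs_inv_intCast_le_one (m - k)) hpj

theorem summable_sign_mul_inv_pow_mul_inv_pow_mul_inv_pow (he : |e| = 1) {a b c : ℕ} (ha : 1 ≤ a)
    (hb : 1 ≤ b) (hc : 1 ≤ c) :
    Summable fun p : ℕ × ℤ =>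
      e ^ p.2 * ((p.1 : ℝ)⁻¹ ^ a * (p.2 : ℝ)⁻¹ ^ b * ((p.1 : ℝ) - p.2)⁻¹ ^ c) := by
  have hprod : Summable fun p : ℤ × ℤ => (√|(p.1 : ℝ)⁻¹| * √|(p.2 : ℝ)⁻¹|) ^ 3 := by
    simpa only [mul_pow] using summable_sqrt_abs_inv_pow_three.mul_of_nonneg
      summable_sqrt_abs_inv_pow_three (fun _ => by positivity) fun _ => by positivity
  have hxy := hprod.comp_injective (i := fun p : ℕ × ℤ => ((p.1 : ℤ), p.2))
    fun p q h => by grind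
  have hxz := hprod.comp_injective (i := fun p : ℕ × ℤ => ((p.1 : ℤ), p.1 - p.2))
    fun p q h => by grind
  have hyz := hprod.comp_injective (i := fun p : ℕ × ℤ => (p.2, p.1 - p.2))
    fun p q h => by grind
  have hpow : ∀ (k : ℤ) {n : ℕ}, 1 ≤ n → |(k : ℝ)⁻¹ ^ n| ≤ |(k : ℝ)⁻¹| := fun k n hn => by
    rw [abs_pow]
    exact pow_le_of_le_one (abs_nonneg _) (abs_inv_intCast_le_one k) (by omega)
  refine Summable.of_norm_bounded ((hxy.add hxz).add hyz) fun ⟨m, k⟩ => ?_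
  rw [Real.norm_eq_abs, abs_mul, abs_zpow_eq_one he, one_mul]
  calc |(m : ℝ)⁻¹ ^ a * (k : ℝ)⁻¹ ^ b * ((m : ℝ) - k)⁻¹ ^ c|
      ≤ |(m : ℝ)⁻¹ * (k : ℝ)⁻¹ * ((m : ℝ) - k)⁻¹| := by
        simp only [abs_mul]
        exact mul_le_mul (mul_le_mul (hpow m ha) (hpow k hb) (abs_nonneg _) (abs_nonneg _))
          (by exact_mod_cast hpow (m - k) hc) (abs_nonneg _) (by positivity)
    _ ≤ _ := by simpa using abs_mul_mul_le (m : ℝ)⁻¹ (k : ℝ)⁻¹ ((m : ℝ) - k)⁻¹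

end Summability

section Telescoping

theorem hasSum_sub_of_tendsto_zero {f : ℕ → ℝ} (hf : Tendsto f atTop (𝓝 0)) (n : ℕ)
    (hsum : Summable fun m => f (m + n) - f m) :
    HasSum (fun m => f (m + n) - f m) (-∑ i ∈ Finset.range n, f i) := by
  refine hsum.hasSum_iff_tendsto_nat.2 ?_
  have htail : Tendsto (fun M => ∑ i ∈ Finset.range n, f (M + i)) atTop (𝓝 0) := by
    simpa using tendsto_finsetSum (Finset.range n) fun i _ => hf.comp (tendsto_add_atTop_nat i)
  have hpartial : ∀ M, ∑ m ∈ Finset.range M, (f (m + n) - f m) =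
      ∑ i ∈ Finset.range n, f (M + i) - ∑ i ∈ Finset.range n, f i := fun M => by
    have h := Finset.sum_range_add f M n
    rw [add_comm M n, Finset.sum_range_add f n M] at h
    simp only [Finset.sum_sub_distrib, add_comm _ n]
    linarith
  simpa [hpartial] using htail.sub_const (∑ i ∈ Finset.range n, f i)

theorem tendsto_inv_sub_pow_atTop (c : ℝ) {j : ℕ} (hj : j ≠ 0) :
    Tendsto (fun m : ℕ => ((m : ℝ) - c)⁻¹ ^ j) atTop (𝓝 0) := by
  have h : Tendsto (fun m : ℕ => (m : ℝ) - c) atTop atTop :=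
    tendsto_atTop_add_const_right _ _ tendsto_natCast_atTop_atTop
  simpa [hj] using (tendsto_inv_atTop_zero.comp h).pow j

end Telescoping

section BilateralConvolution

variable {e : ℝ}

/-- The bilateral zeta series `∑_{k ≠ 0} e ^ k / k ^ p`, for a sign `e = ±1`. -/
noncomputable def bilateralZeta (e : ℝ) (p : ℕ) : ℝ := ∑' k : ℤ, e ^ k * (k : ℝ)⁻¹ ^ p

theorem bilateralZeta_mem_zetaAlgebra (he : |e| = 1) {p : ℕ} (hp : 2 ≤ p) :
    bilateralZeta e p ∈ zetaAlgebra := by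
  have hsum : Summable fun k : ℤ => e ^ k * (k : ℝ)⁻¹ ^ p := by
    simpa using summable_sign_mul_inv_pow_mul_inv_pow he 0 (p := p) (j := 0) hp
  have hfold : HasSumIn zetaAlgebra fun n : ℕ =>
      e ^ (n : ℤ) * ((n : ℤ) : ℝ)⁻¹ ^ p + e ^ (-n : ℤ) * ((-n : ℤ) : ℝ)⁻¹ ^ p := by
    refine ((hasSumIn_sign_mul_inv_pow he hp).ratCast_mul (1 + (-1) ^ p)).congr fun n => ?_
    rw [zpow_neg_eq_self he, zpow_natCast]
    push_cast
    rw [inv_neg, neg_pow]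
    ring
  have hp0 : p ≠ 0 := by omega
  rw [bilateralZeta, ← add_zero (tsum _)]
  convert hfold.tsum_mem
  rw [hsum.hasSum.nat_add_neg.tsum_eq]
  simp [hp0]

/-- The term `e ^ k / (k ^ p (m - k) ^ j)` of the bilateral convolution. The poles `k = 0, m` are
excluded explicitly because `x⁻¹ ^ 0 = 1` also at `x = 0`. -/
noncomputable def bilateralTerm (e : ℝ) (p j m : ℕ) (k : ℤ) : ℝ :=
  if k = 0 ∨ k = m then 0 else e ^ k * ((k : ℝ)⁻¹ ^ p * ((m : ℝ) - k)⁻¹ ^ j)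

/-- The bilateral convolution `∑_{k ≠ 0, m} e ^ k / (k ^ p (m - k) ^ j)`, for a sign `e = ±1`. -/
noncomputable def bilateralConv (e : ℝ) (p j m : ℕ) : ℝ := ∑' k : ℤ, bilateralTerm e p j m k

theorem bilateralTerm_of_ne_zero {p j : ℕ} (hp : p ≠ 0) (hj : j ≠ 0) (m : ℕ) (k : ℤ) :
    bilateralTerm e p j m k = e ^ k * ((k : ℝ)⁻¹ ^ p * ((m : ℝ) - k)⁻¹ ^ j) := by
  unfold bilateralTerm
  split_ifs with h
  · rcases h with rfl | rfl <;> simp [hp, hj]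
  · rfl

theorem hasSum_bilateralConv (he : |e| = 1) {p j : ℕ} (hpj : 2 ≤ p + j) (m : ℕ) :
    HasSum (bilateralTerm e p j m) (bilateralConv e p j m) := by
  refine (Summable.of_norm_bounded
    (summable_sign_mul_inv_pow_mul_inv_pow he m hpj).norm fun k => ?_).hasSum
  unfold bilateralTerm
  split_ifs
  · rw [norm_zero]
    exact norm_nonneg _
  · rw [Int.cast_natCast]

theorem bilateralConv_succ_succ (he : |e| = 1) {p j m : ℕ} (hpj : 1 ≤ p + j) (hm : m ≠ 0) :
    bilateralConv e (p + 1) (j + 1) m =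
      (m : ℝ)⁻¹ * (bilateralConv e (p + 1) j m + bilateralConv e p (j + 1) m) := by
  have hrec := ((hasSum_bilateralConv he (p := p + 1) (j := j) (by omega) m).add
    (hasSum_bilateralConv he (p := p) (j := j + 1) (by omega) m)).mul_left (m : ℝ)⁻¹
  rw [← hrec.tsum_eq]
  refine tsum_congr fun k => ?_
  unfold bilateralTerm
  split_ifs with hk
  · simp
  · obtain ⟨hk0, hkm⟩ := not_or.1 hk
    have hm' : (m : ℝ) ≠ 0 := by exact_mod_cast hm
    have hk0' : (k : ℝ) ≠ 0 := by exact_mod_cast hk0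
    have hkm' : (m : ℝ) - k ≠ 0 := sub_ne_zero.2 (by exact_mod_cast Ne.symm hkm)
    have hpf : (k : ℝ)⁻¹ * ((m : ℝ) - k)⁻¹ = (m : ℝ)⁻¹ * ((k : ℝ)⁻¹ + ((m : ℝ) - k)⁻¹) := by
      field_simp
      ring
    linear_combination (e ^ k * (k : ℝ)⁻¹ ^ p * ((m : ℝ) - k)⁻¹ ^ j) * hpf

theorem bilateralConv_comm (he : |e| = 1) (p j m : ℕ) :
    bilateralConv e p j m = e ^ m * bilateralConv e j p m := by
  have he0 : e ≠ 0 := by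
    rintro rfl
    simp at he
  unfold bilateralConv
  rw [← tsum_mul_left, ← (Equiv.subLeft (m : ℤ)).tsum_eq]
  refine tsum_congr fun k => ?_
  simp only [bilateralTerm, Equiv.subLeft_apply, sub_eq_zero, sub_eq_self,
    eq_comm (a := (m : ℤ)), or_comm, mul_ite, mul_zero]
  rw [zpow_sub₀ he0, zpow_natCast, div_eq_mul_inv, ← zpow_neg, zpow_neg_eq_self he]
  push_cast
  rw [sub_sub_cancel]
  congr 1
  ring

theorem bilateralConv_zero_right (he : |e| = 1) {p : ℕ} (hp : 2 ≤ p) (m : ℕ) :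
    bilateralConv e p 0 m = bilateralZeta e p - e ^ m * (m : ℝ)⁻¹ ^ p := by
  have hsum : Summable fun k : ℤ => e ^ k * (k : ℝ)⁻¹ ^ p := by
    simpa using summable_sign_mul_inv_pow_mul_inv_pow he 0 (p := p) (j := 0) hp
  unfold bilateralZeta
  rw [← (hsum.hasSum.sub (hasSum_ite_eq (m : ℤ) (e ^ m * (m : ℝ)⁻¹ ^ p))).tsum_eq]
  refine tsum_congr fun k => ?_
  unfold bilateralTerm
  have hp0 : p ≠ 0 := by omega
  rcases eq_or_ne k m with rfl | hkm
  · simp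
  · rcases eq_or_ne k 0 with rfl | hk0
    · simp [hkm, hp0]
    · simp [hkm, hk0]

theorem sum_sign_mul_inv_sub (he : |e| = 1) (m : ℕ) :
    ∑ i ∈ Finset.range (2 * m), e ^ i * ((i : ℝ) - m)⁻¹ = -(m : ℝ)⁻¹ := by
  have hee : e * e = 1 := by simpa using zpow_mul_self_eq_one he 1
  have hodd : ∀ i ∈ Finset.range (2 * m + 1),
      e ^ (2 * m + 1 - 1 - i) * (((2 * m + 1 - 1 - i : ℕ) : ℝ) - m)⁻¹ =
        -(e ^ i * ((i : ℝ) - m)⁻¹) := fun i hi => by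
    have hi' : i ≤ 2 * m := Finset.mem_range_succ_iff.1 hi
    have hpow : e ^ (2 * m - i) = e ^ i := by
      rw [← mul_one (e ^ (2 * m - i)), ← one_pow i, ← hee, mul_pow, ← mul_assoc, ← pow_add,
        Nat.sub_add_cancel hi', pow_mul, sq, hee, one_pow, one_mul]
    rw [Nat.add_sub_cancel, hpow, Nat.cast_sub hi', ← mul_neg, ← inv_neg]
    push_cast
    ring
  have hreflect := Finset.sum_range_reflect (fun i : ℕ => e ^ i * ((i : ℝ) - m)⁻¹) (2 * m + 1)
  rw [Finset.sum_congr rfl hodd, Finset.sum_neg_distrib, Finset.sum_range_succ] at hreflect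
  have hlast : e ^ (2 * m) * (((2 * m : ℕ) : ℝ) - m)⁻¹ = (m : ℝ)⁻¹ := by
    rw [pow_mul, sq, hee, one_pow, one_mul]
    push_cast
    ring
  linarith

theorem bilateralTerm_add_neg (he : |e| = 1) {m : ℕ} (hm : m ≠ 0) (k : ℕ) :
    bilateralTerm e 1 1 m k + bilateralTerm e 1 1 m (-k) =
      (m : ℝ)⁻¹ * (e ^ k * ((k : ℝ) + m)⁻¹ - e ^ k * ((k : ℝ) - m)⁻¹) -
        ((if k = 0 then 2 * (m : ℝ)⁻¹ ^ 2 else 0) +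
          if k = m then e ^ m * (m : ℝ)⁻¹ ^ 2 else 0) := by
  have hm' : (m : ℝ) ≠ 0 := by exact_mod_cast hm
  rcases eq_or_ne k 0 with rfl | hk
  · simp only [bilateralTerm, hm.symm, Nat.cast_zero, neg_zero, true_or, if_true,
      if_false, zero_sub, inv_neg]
    ring
  have hk' : (k : ℝ) ≠ 0 := by exact_mod_cast hk
  have hkm' : (k : ℝ) + m ≠ 0 := by positivity
  have hmk' : (m : ℝ) + k ≠ 0 := by positivity
  have hneg : ¬(-(k : ℤ) = 0 ∨ -(k : ℤ) = m) := by omega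
  rcases eq_or_ne k m with rfl | hkm
  · simp only [bilateralTerm, or_true, if_true, if_neg hneg, if_neg hm, zpow_neg_eq_self he,
      sub_self, inv_zero, zpow_natCast]
    push_cast
    field_simp
    ring
  · have hpos : ¬((k : ℤ) = 0 ∨ (k : ℤ) = m) := by omega
    have hsub' : (m : ℝ) - k ≠ 0 := sub_ne_zero.2 (by exact_mod_cast hkm.symm)
    rw [← neg_sub (m : ℝ) k, add_comm (k : ℝ)]
    simp only [bilateralTerm, if_neg hpos, if_neg hneg, if_neg hk, if_neg hkm,
      zpow_neg_eq_self he, zpow_natCast, pow_one]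
    push_cast
    rw [sub_neg_eq_add]
    field_simp
    ring

-- Adding the terms `k` and `-k` makes the partial fractions telescope with step `2 * m`.
theorem bilateralConv_one_one (he : |e| = 1) {m : ℕ} (hm : m ≠ 0) :
    bilateralConv e 1 1 m = -(1 + e ^ m) * (m : ℝ)⁻¹ ^ 2 := by
  have hm' : (m : ℝ) ≠ 0 := by exact_mod_cast hm
  have hee : e * e = 1 := by simpa using zpow_mul_self_eq_one he 1
  set h : ℕ → ℝ := fun k => e ^ k * ((k : ℝ) - m)⁻¹ with hh
  have hshift : ∀ k : ℕ, h (k + 2 * m) = e ^ k * ((k : ℝ) + m)⁻¹ := fun k => by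
    simp only [hh, pow_add, pow_mul, sq, hee, one_pow, mul_one]
    push_cast
    ring
  have hlim : Tendsto h atTop (𝓝 0) := by
    refine tendsto_zero_iff_abs_tendsto_zero _ |>.2 ?_
    simpa [hh, Function.comp_def, abs_mul, he] using
      (tendsto_inv_sub_pow_atTop m one_ne_zero).abs
  have hfold : HasSum (fun k : ℕ => bilateralTerm e 1 1 m k + bilateralTerm e 1 1 m (-k))
      (bilateralConv e 1 1 m) := by
    have hzero : bilateralTerm e 1 1 m 0 = 0 := if_pos (Or.inl rfl)
    rw [← add_zero (bilateralConv e 1 1 m), ← hzero]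
    exact (hasSum_bilateralConv he le_rfl m).nat_add_neg
  have hcorr : HasSum (fun k : ℕ => (if k = 0 then 2 * (m : ℝ)⁻¹ ^ 2 else 0) +
      if k = m then e ^ m * (m : ℝ)⁻¹ ^ 2 else 0) (2 * (m : ℝ)⁻¹ ^ 2 + e ^ m * (m : ℝ)⁻¹ ^ 2) :=
    (hasSum_ite_eq 0 _).add (hasSum_ite_eq m _)
  have hdiff : HasSum (fun k => h (k + 2 * m) - h k)
      (m * (bilateralConv e 1 1 m + (2 * (m : ℝ)⁻¹ ^ 2 + e ^ m * (m : ℝ)⁻¹ ^ 2))) := by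
    simpa only [bilateralTerm_add_neg he hm, ← hshift, sub_add_cancel,
      mul_inv_cancel_left₀ hm'] using (hfold.add hcorr).mul_left (m : ℝ)
  have htel := hdiff.unique (hasSum_sub_of_tendsto_zero hlim (2 * m) hdiff.summable)
  rw [sum_sign_mul_inv_sub he, neg_neg] at htel
  rw [eq_sub_of_add_eq ((eq_inv_mul_iff_mul_eq₀ hm').2 htel)]
  ring

theorem hasSumIn_inv_pow_mul_bilateralConv (he : |e| = 1) {s p j : ℕ} (hs : 1 ≤ s)
    (hpj : 2 ≤ p + j) (hsp : 2 ≤ s + p) (hsj : 2 ≤ s + j) :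
    HasSumIn zetaAlgebra fun m : ℕ => (m : ℝ)⁻¹ ^ s * bilateralConv e p j m := by
  match p, j with
  | p, 0 =>
    have hp : 2 ≤ p := hpj
    refine (((hasSumIn_inv_pow hsj).mul_left (bilateralZeta_mem_zetaAlgebra he hp)).sub
      (hasSumIn_sign_mul_inv_pow he hsp)).congr fun m => ?_
    rw [bilateralConv_zero_right he hp]
    ring
  | 0, j + 1 =>
    have hj : 2 ≤ j + 1 := by omega
    refine (((hasSumIn_sign_mul_inv_pow he hsp).mul_left (bilateralZeta_mem_zetaAlgebra he hj)).sub
      (hasSumIn_inv_pow hsj)).congr fun m => ?_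
    have hmm := zpow_mul_self_eq_one he m
    rw [zpow_natCast] at hmm
    rw [bilateralConv_comm he, bilateralConv_zero_right he hj]
    linear_combination (-(m : ℝ)⁻¹ ^ s * (m : ℝ)⁻¹ ^ (j + 1)) * hmm
  | p + 1, j + 1 =>
    have hs0 : s ≠ 0 := by omega
    obtain ⟨rfl, rfl⟩ | hpj' : p = 0 ∧ j = 0 ∨ 1 ≤ p + j := by omega
    · refine (((hasSumIn_inv_pow (s := s + 2) (by omega)).add
        (hasSumIn_sign_mul_inv_pow he (s := s + 2) (by omega))).ratCast_mul (-1)).congr fun m => ?_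
      rcases eq_or_ne m 0 with rfl | hm
      · simp [hs0]
      · rw [bilateralConv_one_one he hm]
        push_cast
        ring
    · refine ((hasSumIn_inv_pow_mul_bilateralConv he (s := s + 1) (p := p + 1) (j := j) (by omega)
        (by omega) (by omega) (by omega)).add
        (hasSumIn_inv_pow_mul_bilateralConv he (s := s + 1) (p := p) (j := j + 1) (by omega)
        (by omega) (by omega) (by omega))).congr fun m => ?_
      rcases eq_or_ne m 0 with rfl | hm
      · simp [hs0]
      · rw [bilateralConv_succ_succ he hpj' hm]
        ring
  termination_by p + j

end BilateralConvolution

section Parity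

variable {e : ℝ} {j : ℕ}

/-- The generalized harmonic number `∑_{0 < i < n} 1 / i ^ j`. -/
noncomputable def harmonicSum (j n : ℕ) : ℝ := ∑ i ∈ Finset.Ico 1 n, (i : ℝ)⁻¹ ^ j

/-- The kernel `(1 / (m - k) ^ j - 1 / m ^ j) / k`, expanded as a geometric sum. Its rows are
bilateral convolutions, and its columns telescope to harmonic sums. -/
noncomputable def eulerKernel (j m : ℕ) (k : ℤ) : ℝ :=
  ∑ i ∈ Finset.range j, (m : ℝ)⁻¹ ^ (i + 1) * ((m : ℝ) - k)⁻¹ ^ (j - i)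

theorem eulerKernel_eq_mul_geom_sum (j m : ℕ) (k : ℤ) :
    eulerKernel j m k = (m : ℝ)⁻¹ * ((m : ℝ) - k)⁻¹ *
      ∑ i ∈ Finset.range j, (m : ℝ)⁻¹ ^ i * ((m : ℝ) - k)⁻¹ ^ (j - 1 - i) := by
  rw [eulerKernel, Finset.mul_sum]
  refine Finset.sum_congr rfl fun i hi => ?_
  rw [show j - i = j - 1 - i + 1 by have := Finset.mem_range.1 hi; omega]
  ring

-- The correction terms at `m = k` and `m = 0` come from the convention `0⁻¹ = 0`.
theorem mul_eulerKernel (hj : j ≠ 0) {k : ℤ} (hk : k ≠ 0) (m : ℕ) :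
    k * eulerKernel j m k = ((m : ℝ) - k)⁻¹ ^ j - (m : ℝ)⁻¹ ^ j +
      ((if (m : ℤ) = k then (k : ℝ)⁻¹ ^ j else 0) - if m = 0 then (-k : ℝ)⁻¹ ^ j else 0) := by
  rw [eulerKernel_eq_mul_geom_sum]
  rcases eq_or_ne m 0 with rfl | hm
  · simp [hk.symm, hj]
  rcases eq_or_ne (m : ℤ) k with rfl | hmk
  · simp [hj, hm]
  have hm' : (m : ℝ) ≠ 0 := by exact_mod_cast hm
  have hmk' : (m : ℝ) - k ≠ 0 := sub_ne_zero.2 (by exact_mod_cast hmk)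
  have hpf : (k : ℝ) * ((m : ℝ)⁻¹ * ((m : ℝ) - k)⁻¹) = ((m : ℝ) - k)⁻¹ - (m : ℝ)⁻¹ := by
    field_simp
    ring
  rw [if_neg hm, if_neg hmk, ← mul_assoc, hpf]
  linear_combination -geom_sum₂_mul (m : ℝ)⁻¹ ((m : ℝ) - k)⁻¹ j

theorem summable_eulerKernel (j : ℕ) (k : ℤ) : Summable fun m : ℕ => eulerKernel j m k := by
  refine summable_sum fun i hi => ?_
  have hi' := Finset.mem_range.1 hi
  have h := (summable_sign_mul_inv_pow_mul_inv_pow abs_one k (p := i + 1) (j := j - i)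
    (by omega)).comp_injective (Nat.cast_injective (R := ℤ))
  refine (h.mul_left ((-1) ^ (j - i))).congr fun m => ?_
  rw [Function.comp_apply, ← neg_sub (k : ℝ), inv_neg, neg_pow, one_zpow]
  push_cast
  ring

theorem hasSum_natCast_mul_eulerKernel (hj : j ≠ 0) {n : ℕ} (hn : n ≠ 0) :
    HasSum (fun m : ℕ => (n : ℝ) * eulerKernel j m n)
      ((-1) ^ j * harmonicSum j n + (n : ℝ)⁻¹ ^ j) := by
  set f : ℕ → ℝ := fun m => ((m : ℝ) - n)⁻¹ ^ j with hf
  have hsum : ∑ i ∈ Finset.range n, f i = (-n : ℝ)⁻¹ ^ j + (-1) ^ j * harmonicSum j n := by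
    have hreflect := Finset.sum_Ico_reflect (fun i : ℕ => (-1) ^ j * (i : ℝ)⁻¹ ^ j) 1 n.le_succ
    rw [Nat.add_sub_cancel_left, Nat.add_sub_cancel] at hreflect
    rw [Finset.range_eq_Ico, Finset.sum_eq_sum_Ico_succ_bot (by omega), harmonicSum,
      Finset.mul_sum, ← hreflect]
    congr 1
    · simp only [hf, Nat.cast_zero, zero_sub]
    · refine Finset.sum_congr rfl fun i hi => ?_
      rw [Nat.cast_sub (Finset.mem_Ico.1 hi).2.le, ← mul_pow, neg_one_mul, ← inv_neg, neg_sub]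
  have hcorr := (hasSum_ite_eq n ((n : ℝ)⁻¹ ^ j)).sub (hasSum_ite_eq 0 ((-n : ℝ)⁻¹ ^ j))
  have hterm : ∀ m : ℕ, (n : ℝ) * eulerKernel j m n = f m - f (m + n) +
      ((if m = n then (n : ℝ)⁻¹ ^ j else 0) - if m = 0 then (-n : ℝ)⁻¹ ^ j else 0) := fun m => by
    have h := mul_eulerKernel hj (k := n) (by exact_mod_cast hn) m
    simpa [hf] using h
  have hdiff : Summable fun m => f (m + n) - f m := by
    refine (hcorr.summable.sub ((summable_eulerKernel j n).mul_left (n : ℝ))).congr fun m => ?_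
    rw [hterm]
    ring
  have htel := (hasSum_sub_of_tendsto_zero (tendsto_inv_sub_pow_atTop n hj) n hdiff).neg.add hcorr
  have hvalue : (-1) ^ j * harmonicSum j n + (n : ℝ)⁻¹ ^ j =
      ∑ i ∈ Finset.range n, f i + ((n : ℝ)⁻¹ ^ j - (-n : ℝ)⁻¹ ^ j) := by
    rw [hsum]
    ring
  rw [hvalue]
  simpa only [hterm, neg_sub, neg_neg] using htel

theorem hasSum_neg_natCast_mul_eulerKernel (hj : j ≠ 0) {n : ℕ} (hn : n ≠ 0) :
    HasSum (fun m : ℕ => -(n : ℝ) * eulerKernel j m (-n)) (-harmonicSum j n - (n : ℝ)⁻¹ ^ j) := by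
  set f : ℕ → ℝ := fun m => (m : ℝ)⁻¹ ^ j with hf
  have hlim : Tendsto f atTop (𝓝 0) := by simpa [hf] using tendsto_inv_sub_pow_atTop 0 hj
  have hsum : ∑ i ∈ Finset.range n, f i = harmonicSum j n := by
    rw [Finset.range_eq_Ico, Finset.sum_eq_sum_Ico_succ_bot (by omega), harmonicSum]
    simp [hf, hj]
  have hcorr := hasSum_ite_eq (0 : ℕ) ((n : ℝ)⁻¹ ^ j)
  have hterm : ∀ m : ℕ, -(n : ℝ) * eulerKernel j m (-n) = f (m + n) - f m -
      if m = 0 then (n : ℝ)⁻¹ ^ j else 0 := fun m => by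
    have h := mul_eulerKernel hj (k := -n) (by simpa using hn) m
    simpa [hf, show (m : ℤ) ≠ -n by omega, sub_eq_add_neg] using h
  have hdiff : Summable fun m => f (m + n) - f m := by
    refine (((summable_eulerKernel j (-n)).mul_left (-n : ℝ)).add hcorr.summable).congr fun m => ?_
    rw [hterm]
    ring
  simp only [hterm, ← hsum]
  exact (hasSum_sub_of_tendsto_zero hlim n hdiff).sub hcorr

theorem hasSumIn_sign_mul_inv_pow_mul_eulerKernel (he : |e| = 1) {p : ℕ} (hp : 1 ≤ p) (j : ℕ) :
    HasSumIn zetaAlgebra fun q : ℕ × ℤ => e ^ q.2 * (q.2 : ℝ)⁻¹ ^ p * eulerKernel j q.1 q.2 := by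
  have hexpand : ∀ q : ℕ × ℤ, e ^ q.2 * (q.2 : ℝ)⁻¹ ^ p * eulerKernel j q.1 q.2 =
      ∑ i ∈ Finset.range j, (q.1 : ℝ)⁻¹ ^ (i + 1) * bilateralTerm e p (j - i) q.1 q.2 := fun q => by
    rw [eulerKernel, Finset.mul_sum]
    refine Finset.sum_congr rfl fun i hi => ?_
    have hij := Nat.sub_ne_zero_of_lt (Finset.mem_range.1 hi)
    rw [bilateralTerm_of_ne_zero (by omega) hij]
    ring
  refine (HasSumIn.sum fun i hi => ?_).congr hexpand
  have hij : i < j := Finset.mem_range.1 hi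
  have hterm : ∀ q : ℕ × ℤ, (q.1 : ℝ)⁻¹ ^ (i + 1) * bilateralTerm e p (j - i) q.1 q.2 =
      e ^ q.2 * ((q.1 : ℝ)⁻¹ ^ (i + 1) * (q.2 : ℝ)⁻¹ ^ p * ((q.1 : ℝ) - q.2)⁻¹ ^ (j - i)) :=
    fun q => by
      rw [bilateralTerm_of_ne_zero (by omega) (by omega)]
      ring
  have hsum := summable_sign_mul_inv_pow_mul_inv_pow_mul_inv_pow he i.succ_pos hp
    (Nat.sub_pos_of_lt hij)
  have hrow : ∀ m : ℕ, HasSum (fun k : ℤ => (m : ℝ)⁻¹ ^ (i + 1) * bilateralTerm e p (j - i) m k)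
      ((m : ℝ)⁻¹ ^ (i + 1) * bilateralConv e p (j - i) m) := fun m =>
    (hasSum_bilateralConv he (by omega) m).mul_left _
  exact .of_prod_fiberwise (hsum.congr fun q => (hterm q).symm) hrow
    (hasSumIn_inv_pow_mul_bilateralConv he (by omega) (by omega) (by omega) (by omega))

theorem hasSumIn_sign_mul_inv_pow_mul_harmonicSum_zero (he : |e| = 1) {p : ℕ} (hp : 3 ≤ p) :
    HasSumIn zetaAlgebra fun n : ℕ => e ^ n * (n : ℝ)⁻¹ ^ p * harmonicSum 0 n := by
  obtain ⟨p, rfl⟩ : ∃ p', p = p' + 1 := ⟨p - 1, by omega⟩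
  have hp0 : p ≠ 0 := by omega
  refine ((hasSumIn_sign_mul_inv_pow he (s := p) (by omega)).sub
    (hasSumIn_sign_mul_inv_pow he (s := p + 1) (by omega))).congr fun n => ?_
  rcases eq_or_ne n 0 with rfl | hn
  · simp [harmonicSum, hp0]
  · have hn' : (n : ℝ) ≠ 0 := by exact_mod_cast hn
    simp only [harmonicSum, pow_zero, Finset.sum_const, Nat.card_Ico, nsmul_eq_mul, mul_one,
      Nat.cast_sub (Nat.one_le_iff_ne_zero.2 hn), Nat.cast_one]
    linear_combination (e ^ n * (n : ℝ)⁻¹ ^ p) * inv_mul_cancel₀ hn'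

theorem tsum_columns_eulerKernel (he : |e| = 1) {p : ℕ} (hj : j ≠ 0) {n : ℕ} (hn : n ≠ 0) :
    ∑' m : ℕ, e ^ (n : ℤ) * ((n : ℤ) : ℝ)⁻¹ ^ p * eulerKernel j m n +
      ∑' m : ℕ, e ^ (-n : ℤ) * ((-n : ℤ) : ℝ)⁻¹ ^ p * eulerKernel j m (-n) =
    e ^ n * (n : ℝ)⁻¹ ^ (p + 1) * ((-1) ^ j * harmonicSum j n + (n : ℝ)⁻¹ ^ j +
      (-1) ^ (p + 1) * (-harmonicSum j n - (n : ℝ)⁻¹ ^ j)) := by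
  have hinv : (n : ℝ)⁻¹ * n = 1 := inv_mul_cancel₀ (by exact_mod_cast hn)
  rw [mul_add, ← ((hasSum_natCast_mul_eulerKernel hj hn).mul_left _).tsum_eq, ← mul_assoc,
    ← ((hasSum_neg_natCast_mul_eulerKernel hj hn).mul_left _).tsum_eq]
  congr 1 <;> refine tsum_congr fun m => ?_
  · rw [zpow_natCast, Int.cast_natCast]
    linear_combination (-(e ^ n * (n : ℝ)⁻¹ ^ p * eulerKernel j m n)) * hinv
  · rw [zpow_neg_eq_self he, zpow_natCast, Int.cast_neg, Int.cast_natCast, inv_neg, neg_pow]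
    linear_combination (-((-1) ^ p * e ^ n * (n : ℝ)⁻¹ ^ p * eulerKernel j m (-n))) * hinv

-- Only for odd `p + j` do the columns `n` and `-n` of the kernel reinforce each other.
theorem hasSumIn_sign_mul_inv_pow_mul_harmonicSum (he : |e| = 1) {p : ℕ} (hp : 2 ≤ p)
    (hodd : Odd (p + j)) :
    HasSumIn zetaAlgebra fun n : ℕ => e ^ n * (n : ℝ)⁻¹ ^ p * harmonicSum j n := by
  rcases eq_or_ne j 0 with rfl | hj
  · exact hasSumIn_sign_mul_inv_pow_mul_harmonicSum_zero he (by grind)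
  obtain ⟨p, rfl⟩ : ∃ p', p = p' + 1 := ⟨p - 1, by omega⟩
  have hp0 : p ≠ 0 := by omega
  have hjj : (-1 : ℝ) ^ j * (-1) ^ j = 1 := by simp [← mul_pow]
  have hsign : (-1 : ℝ) ^ (p + 1) = -(-1) ^ j := by
    have h := hodd.neg_one_pow (α := ℝ)
    rw [pow_add] at h
    linear_combination (-1) ^ j * h - (-1) ^ (p + 1) * hjj
  set C : ℤ → ℝ := fun k => ∑' m : ℕ, e ^ k * (k : ℝ)⁻¹ ^ p * eulerKernel j m k with hC
  have hcol : HasSumIn zetaAlgebra C := by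
    have h := (hasSumIn_sign_mul_inv_pow_mul_eulerKernel he (p := p) (by omega) j).prod_swap
    exact h.prod_fiberwise fun k => (h.summable.prod_factor k).hasSum
  have hC0 : C 0 = 0 := by simp [hC, hp0]
  have hfold : ∀ n : ℕ, C n + C (-n) = e ^ n * (n : ℝ)⁻¹ ^ (p + 1) *
      (2 * (-1) ^ j * harmonicSum j n + (1 + (-1) ^ j) * (n : ℝ)⁻¹ ^ j) := fun n => by
    rcases eq_or_ne n 0 with rfl | hn
    · simp [hC0]
    · rw [hC, tsum_columns_eulerKernel he hj hn, hsign]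
      ring
  refine (((hcol.nat_add_neg hC0).sub ((hasSumIn_sign_mul_inv_pow he (s := p + 1 + j)
    (by omega)).ratCast_mul (1 + (-1) ^ j))).ratCast_mul ((-1) ^ j / 2)).congr fun n => ?_
  rw [hfold]
  push_cast
  linear_combination (-e ^ n * (n : ℝ)⁻¹ ^ (p + 1) * harmonicSum j n) * hjj

end Parity

section DoubleSeries

namespace HasSumIn

variable {A : Subalgebra ℚ ℝ}

theorem of_sum_Ico {h : ℕ → ℕ → ℝ} (h0 : ∀ n i, 0 ≤ h n i)
    (hsum : HasSumIn A fun n => ∑ i ∈ Finset.Ico 1 n, h n i) :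
    HasSumIn A fun p : ℕ+ × ℕ+ => h (p.1 + p.2) p.1 := by
  set G : ℕ × ℕ → ℝ := fun q => if q.2 ∈ Finset.Ico 1 q.1 then h q.1 q.2 else 0 with hG
  have hrow : ∀ n, HasSum (fun i => G (n, i)) (∑ i ∈ Finset.Ico 1 n, h n i) := fun n => by
    rw [Finset.sum_congr rfl fun i hi => (if_pos hi).symm]
    exact hasSum_sum_of_ne_finset_zero fun i hi => if_neg hi
  have hG0 : 0 ≤ G := fun q => by
    simp only [hG, Pi.zero_apply]
    split_ifs
    exacts [h0 _ _, le_rfl]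
  have hGsum : Summable G := (summable_prod_of_nonneg hG0).2
    ⟨fun n => (hrow n).summable, hsum.summable.congr fun n => (hrow n).tsum_eq.symm⟩
  have hinj : Function.Injective fun p : ℕ+ × ℕ+ => ((p.1 + p.2 : ℕ), (p.1 : ℕ)) :=
    fun p q hpq => Prod.ext (PNat.coe_injective (by grind)) (PNat.coe_injective (by grind))
  refine ((of_prod_fiberwise hGsum hrow hsum).comp_injective hinj fun q hq => ?_).congr fun p => ?_
  · refine if_neg fun hmem => hq ?_
    obtain ⟨hpos, hlt⟩ := Finset.mem_Ico.1 hmem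
    refine ⟨(⟨q.2, hpos⟩, ⟨q.1 - q.2, Nat.sub_pos_of_lt hlt⟩), Prod.ext ?_ rfl⟩
    exact Nat.add_sub_cancel' hlt.le
  · simp [hG]

theorem indicator_lt {α : Type*} [LinearOrder α] {g : α × α → ℝ} (hg : HasSumIn A g)
    (hsymm : ∀ p, g p.swap = g p) (hdiag : HasSumIn A fun a => g (a, a)) :
    HasSumIn A ({p | p.1 < p.2}.indicator g) := by
  set D : α × α → ℝ := fun p => if p.1 = p.2 then g p else 0 with hD
  set K : α × α → ℝ := {p | p.1 < p.2}.indicator g with hK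
  have hDsum : HasSumIn A D := by
    obtain ⟨x, hxA, hx⟩ := hdiag
    have hinj : Function.Injective fun a : α => (a, a) := fun a b h => congrArg Prod.fst h
    refine ⟨x, hxA, (hinj.hasSum_iff fun p hp => if_neg fun h => hp ⟨p.1, Prod.ext rfl h⟩).1 ?_⟩
    simpa [hD, Function.comp_def] using hx
  have hsplit : ∀ p, K p + K p.swap = g p - D p := fun p => by
    rcases lt_trichotomy p.1 p.2 with h | h | h
    · simp [hK, hD, h, h.not_gt, h.ne]
    · simp [hK, hD, h]
    · simp [hK, hD, h, h.not_gt, h.ne', hsymm]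
  have hKsum : Summable K := hg.summable.indicator _
  have hswap : HasSum (K ∘ Prod.swap) (∑' p, K p) :=
    (Equiv.prodComm α α).hasSum_iff.2 hKsum.hasSum
  have htwice : HasSum (fun p => K p + K p.swap) (2 * ∑' p, K p) := by
    rw [two_mul]
    exact hKsum.hasSum.add hswap
  have hmem : 2 * ∑' p, K p ∈ A := by
    rw [← htwice.tsum_eq]
    exact ((hg.sub hDsum).congr hsplit).tsum_mem
  refine ⟨_, ?_, hKsum.hasSum⟩
  simpa using mul_mem (A.algebraMap_mem 2⁻¹) hmem

theorem comp_shear {g : ℕ+ × ℕ+ → ℝ} (hg : HasSumIn A g) (hsymm : ∀ p, g p.swap = g p)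
    (hdiag : HasSumIn A fun n => g (n, n)) :
    HasSumIn A fun p : ℕ+ × ℕ+ => g (p.2, p.1 + p.2) := by
  have hinj : Function.Injective fun p : ℕ+ × ℕ+ => (p.2, p.1 + p.2) := by
    rintro ⟨m, n⟩ ⟨m', n'⟩ h
    obtain ⟨rfl, hadd⟩ := Prod.mk.injEq .. ▸ h
    exact Prod.ext (add_right_cancel hadd) rfl
  refine ((hg.indicator_lt hsymm hdiag).comp_injective hinj fun p hp => ?_).congr fun p => ?_
  · refine Set.indicator_of_notMem (s := {p | p.1 < p.2}) (fun h => hp ?_) g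
    exact ⟨(p.2 - p.1, p.1), Prod.ext rfl (PNat.sub_add_of_lt h)⟩
  · simp [Set.indicator, PNat.lt_add_left]

end HasSumIn

/-- The reciprocal of the linear form `a m + b n` at `p = (m, n)`. -/
noncomputable def invForm (a b : ℕ) (p : ℕ+ × ℕ+) : ℝ := ((a : ℝ) * p.1 + b * p.2)⁻¹

theorem invForm_swap (a b : ℕ) (p : ℕ+ × ℕ+) : invForm a b p.swap = invForm b a p := by
  simp only [invForm, Prod.fst_swap, Prod.snd_swap, add_comm]

theorem invForm_shear (a b : ℕ) (p : ℕ+ × ℕ+) :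
    invForm a b (p.2, p.1 + p.2) = invForm b (a + b) p := by
  simp only [invForm, PNat.add_coe]
  push_cast
  ring_nf

theorem invForm_diag (a b : ℕ) (n : ℕ+) : invForm a b (n, n) = ((a + b : ℕ) : ℝ)⁻¹ * (n : ℝ)⁻¹ := by
  simp only [invForm, ← add_mul, mul_inv]
  push_cast
  rfl

theorem invForm_mul_invForm {a b c d k : ℕ} (hac : a + c = k) (hbd : b + d = k) (hab : 0 < a + b)
    (hcd : 0 < c + d) (p : ℕ+ × ℕ+) : invForm a b p * invForm c d p =
      invForm 1 1 p * (((1 / k : ℚ) : ℝ) * invForm a b p + ((1 / k : ℚ) : ℝ) * invForm c d p) := by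
  have hpos : ∀ {a b : ℕ}, 0 < a + b → (a : ℝ) * p.1 + b * p.2 ≠ 0 := by
    intro a b h
    have := p.1.pos
    have := p.2.pos
    rcases Nat.eq_zero_or_pos a with rfl | ha
    · have : 0 < b := by omega
      positivity
    · positivity
  have hX := hpos hab
  have hY := hpos hcd
  have hZ := hpos (a := 1) (b := 1) two_pos
  have hk : (k : ℝ) ≠ 0 := by exact_mod_cast (by omega : k ≠ 0)
  have hsum : ((a : ℝ) * p.1 + b * p.2) + (c * p.1 + d * p.2) =
      k * ((1 : ℕ) * p.1 + (1 : ℕ) * p.2) := by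
    have hac' : (a : ℝ) + c = k := by exact_mod_cast hac
    have hbd' : (b : ℝ) + d = k := by exact_mod_cast hbd
    linear_combination p.1 * hac' + p.2 * hbd'
  unfold invForm
  generalize (a : ℝ) * p.1 + b * p.2 = X at *
  generalize (c : ℝ) * p.1 + d * p.2 = Y at *
  generalize ((1 : ℕ) : ℝ) * p.1 + (1 : ℕ) * p.2 = Z at *
  push_cast
  field_simp
  linear_combination -hsum

theorem hasSumIn_pnat_inv_pow {s : ℕ} (hs : 2 ≤ s) :
    HasSumIn zetaAlgebra fun n : ℕ+ => (n : ℝ)⁻¹ ^ s := by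
  refine (hasSumIn_inv_pow hs).comp_injective PNat.coe_injective fun n hn => ?_
  obtain rfl : n = 0 := by_contra fun h => hn ⟨⟨n, Nat.pos_of_ne_zero h⟩, rfl⟩
  have hs0 : s ≠ 0 := by omega
  simp [hs0]

theorem hasSumIn_invForm_one_one_mul_invForm_one_zero {q x : ℕ} (hq : 2 ≤ q) (hodd : Odd (q + x)) :
    HasSumIn zetaAlgebra fun p => invForm 1 1 p ^ q * invForm 1 0 p ^ x := by
  refine (HasSumIn.of_sum_Ico (h := fun n i => (n : ℝ)⁻¹ ^ q * (i : ℝ)⁻¹ ^ x)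
    (fun n i => by positivity) ?_).congr fun p => ?_
  · exact (hasSumIn_sign_mul_inv_pow_mul_harmonicSum abs_one hq hodd).congr fun n => by
      rw [one_pow, one_mul, harmonicSum, Finset.mul_sum]
  · simp [invForm]

theorem sum_Ico_inv_add_pow {x n : ℕ} (hn : n ≠ 0) :
    ∑ i ∈ Finset.Ico 1 n, ((n : ℝ) + i)⁻¹ ^ x =
      harmonicSum x (2 * n) - harmonicSum x n - (n : ℝ)⁻¹ ^ x := by
  have hshift := Finset.sum_Ico_add' (fun k : ℕ => (k : ℝ)⁻¹ ^ x) 1 n n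
  have hsplit := Finset.sum_Ico_consecutive (fun k : ℕ => (k : ℝ)⁻¹ ^ x)
    (Nat.one_le_iff_ne_zero.2 hn) (show n ≤ 2 * n by omega)
  have hbot := Finset.sum_eq_sum_Ico_succ_bot (show n < 2 * n by omega)
    fun k : ℕ => (k : ℝ)⁻¹ ^ x
  rw [show 1 + n = n + 1 by ring, ← two_mul] at hshift
  simp only [Nat.cast_add, add_comm _ (n : ℝ)] at hshift
  rw [hshift, harmonicSum, harmonicSum]
  linarith

theorem hasSumIn_invForm_one_one_mul_invForm_two_one {q x : ℕ} (hq : 2 ≤ q) (hodd : Odd (q + x)) :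
    HasSumIn zetaAlgebra fun p => invForm 1 1 p ^ q * invForm 2 1 p ^ x := by
  have hq0 : q ≠ 0 := by omega
  have hH : HasSumIn zetaAlgebra fun n : ℕ => (n : ℝ)⁻¹ ^ q * harmonicSum x n := by
    simpa using hasSumIn_sign_mul_inv_pow_mul_harmonicSum abs_one hq hodd
  have hH2 := (hH.neg_one_pow_mul_iff.1 <|
    (hasSumIn_sign_mul_inv_pow_mul_harmonicSum (e := -1) (by simp) hq hodd).congr fun n =>
      (mul_assoc ..).symm).ratCast_mul (2 ^ q)
  have hz := hasSumIn_inv_pow (s := q + x) (by omega)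
  refine (HasSumIn.of_sum_Ico (h := fun n i => (n : ℝ)⁻¹ ^ q * ((n : ℝ) + i)⁻¹ ^ x)
    (fun n i => by positivity) (((hH2.sub hH).sub hz).congr fun n => ?_)).congr fun p => ?_
  · rcases eq_or_ne n 0 with rfl | hn
    · simp [hq0]
    · rw [← Finset.mul_sum, sum_Ico_inv_add_pow hn]
      push_cast
      rw [mul_inv, mul_pow, ← mul_assoc, ← mul_assoc, ← mul_pow, mul_inv_cancel₀ two_ne_zero]
      ring
  · have hform : (2 * p.1 + p.2 : ℝ) = p.1 + p.2 + p.1 := by ring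
    simp [invForm, hform]

theorem hasSumIn_invForm_pow_swap {a b q x : ℕ}
    (h : HasSumIn zetaAlgebra fun p => invForm 1 1 p ^ q * invForm a b p ^ x) :
    HasSumIn zetaAlgebra fun p => invForm 1 1 p ^ q * invForm b a p ^ x :=
  h.prod_swap.congr fun p => by simp only [Function.comp_apply, invForm_swap]

theorem hasSumIn_invForm_pow_mul_pow_mul_pow {a b c d k : ℕ} (hac : a + c = k) (hbd : b + d = k)
    (hab : 0 < a + b) (hcd : 0 < c + d)
    (hX : ∀ q x, 2 ≤ q → Odd (q + x) →
      HasSumIn zetaAlgebra fun p => invForm 1 1 p ^ q * invForm a b p ^ x)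
    (hY : ∀ q x, 2 ≤ q → Odd (q + x) →
      HasSumIn zetaAlgebra fun p => invForm 1 1 p ^ q * invForm c d p ^ x)
    {x y r : ℕ} (hxr : 2 ≤ x + r) (hyr : 2 ≤ y + r) (hodd : Odd (x + y + r)) :
    HasSumIn zetaAlgebra fun p => invForm a b p ^ x * invForm c d p ^ y * invForm 1 1 p ^ r := by
  refine (HasSumIn.of_mul_eq (W := 1) (invForm_mul_invForm hac hbd hab hcd) x y r
    (fun i j hi hij => (hX j i (by omega) (by grind)).congr fun p => ?_)
    (fun i j hi hij => (hY j i (by omega) (by grind)).congr fun p => ?_)).congr fun p => ?_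
  all_goals rw [Pi.one_apply]; ring

theorem hasSumIn_sheared_invForm_pow {a b : ℕ} (hab : 0 < a + b)
    (hX : ∀ q x, 2 ≤ q → Odd (q + x) →
      HasSumIn zetaAlgebra fun p => invForm 1 1 p ^ q * invForm a b p ^ x)
    {q : ℕ} (hq : 2 ≤ q) (hodd : Odd q) (x : ℕ) :
    HasSumIn zetaAlgebra fun p =>
      (invForm b (a + b) p * invForm a (b + a) p) ^ x * invForm 1 2 p ^ q := by
  have hg := hasSumIn_invForm_pow_mul_pow_mul_pow rfl (add_comm b a) hab (by omega) hX
    (fun q x hq hodd => hasSumIn_invForm_pow_swap (hX q x hq hodd)) (x := x) (y := x) (r := q)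
    (by omega) (by omega) (by grind)
  refine (hg.comp_shear (fun p => ?_) ?_).congr fun p => ?_
  · simp only [invForm_swap]
    ring
  · refine ((hasSumIn_pnat_inv_pow (s := x + x + q) (by omega)).ratCast_mul
      (((a + b : ℕ) : ℚ)⁻¹ ^ x * ((b + a : ℕ) : ℚ)⁻¹ ^ x * ((1 + 1 : ℕ) : ℚ)⁻¹ ^ q)).congr
      fun n => ?_
    simp only [invForm_diag]
    push_cast
    ring
  · simp only [invForm_shear]
    ring

end DoubleSeries

section Pencil

/-- The reciprocal of the member `m ^ 2` of the pencil of binary quadratic forms spanned by `m ^ 2`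
and `n (m + n)`. -/
noncomputable def pencilM (p : ℕ+ × ℕ+) : ℝ := invForm 1 0 p ^ 2

/-- The reciprocal of the member `n (m + n)` of the pencil. -/
noncomputable def pencilP (p : ℕ+ × ℕ+) : ℝ := invForm 0 1 p * invForm 1 1 p

/-- The reciprocal of the member `(m + 3 n) (2 m + 3 n)` of the pencil. -/
noncomputable def pencilQ (p : ℕ+ × ℕ+) : ℝ := invForm 1 3 p * invForm 2 3 p

/-- The reciprocal of the member `(m + 2 n) ^ 2` of the pencil. -/
noncomputable def pencilZ (p : ℕ+ × ℕ+) : ℝ := invForm 1 2 p ^ 2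

theorem pencilM_mul_pencilP (p : ℕ+ × ℕ+) : pencilM p * pencilP p =
    pencilZ p * (((4 : ℚ) : ℝ) * pencilM p + ((1 : ℚ) : ℝ) * pencilP p) := by
  simp only [pencilM, pencilP, pencilZ, invForm]
  push_cast
  field_simp
  ring

theorem pencilM_mul_pencilQ (p : ℕ+ × ℕ+) : pencilM p * pencilQ p =
    pencilZ p * (((4 / 9 : ℚ) : ℝ) * pencilM p + ((1 / 9 : ℚ) : ℝ) * pencilQ p) := by
  simp only [pencilM, pencilQ, pencilZ, invForm]
  push_cast
  field_simp
  ring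

theorem pencilP_mul_pencilQ (p : ℕ+ × ℕ+) : pencilP p * pencilQ p =
    pencilZ p * (((1 / 2 : ℚ) : ℝ) * pencilP p + ((-1 / 2 : ℚ) : ℝ) * pencilQ p) := by
  simp only [pencilP, pencilQ, pencilZ, invForm]
  push_cast
  field_simp
  ring

theorem hasSumIn_pencilP_pow {j : ℕ} (hj : 0 < j) (x : ℕ) :
    HasSumIn zetaAlgebra fun p => invForm 1 2 p * (pencilP p ^ x * pencilZ p ^ j) := by
  refine (hasSumIn_sheared_invForm_pow (a := 1) (b := 0) one_pos
    (fun q x => hasSumIn_invForm_one_one_mul_invForm_one_zero) (q := 2 * j + 1) (by omega)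
    ⟨j, rfl⟩ x).congr fun p => ?_
  simp only [pencilP, pencilZ]
  ring

theorem hasSumIn_pencilQ_pow {j : ℕ} (hj : 0 < j) (x : ℕ) :
    HasSumIn zetaAlgebra fun p => invForm 1 2 p * (pencilQ p ^ x * pencilZ p ^ j) := by
  refine (hasSumIn_sheared_invForm_pow (a := 2) (b := 1) three_pos
    (fun q x => hasSumIn_invForm_one_one_mul_invForm_two_one) (q := 2 * j + 1) (by omega)
    ⟨j, rfl⟩ x).congr fun p => ?_
  simp only [pencilQ, pencilZ]
  ring

theorem hasSumIn_pencilM_pow {j : ℕ} (hj : 0 < j) (x : ℕ) :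
    HasSumIn zetaAlgebra fun p => invForm 1 2 p * (pencilM p ^ x * pencilZ p ^ j) := by
  rcases Nat.eq_zero_or_pos x with rfl | hx
  · simpa using hasSumIn_pencilP_pow hj 0
  refine (hasSumIn_invForm_pow_mul_pow_mul_pow (a := 1) (b := 0) (c := 1) (d := 2) rfl rfl
    (by omega) (by omega) (fun q x => hasSumIn_invForm_one_one_mul_invForm_one_zero)
    (fun q x hq hodd =>
      hasSumIn_invForm_pow_swap (hasSumIn_invForm_one_one_mul_invForm_two_one hq hodd))
    (x := 2 * x) (y := 2 * j + 1) (r := 0) (by omega) (by omega) (by grind)).congr fun p => ?_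
  simp only [pencilM, pencilZ]
  ring

theorem hasSumIn_pencil {a b d r : ℕ} (hab : 0 < a + b + r) (had : 0 < a + d + r)
    (hbd : 0 < b + d + r) : HasSumIn zetaAlgebra fun p =>
      invForm 1 2 p * pencilQ p ^ d * (pencilM p ^ a * pencilP p ^ b * pencilZ p ^ r) := by
  refine .of_mul_eq pencilM_mul_pencilP a b r (fun i j hi hij => ?_) fun i j hi hij => ?_
  · exact (HasSumIn.of_mul_eq pencilM_mul_pencilQ i d j
      (fun i' j' hi' hij' => hasSumIn_pencilM_pow (by omega) i')
      (fun i' j' hi' hij' => hasSumIn_pencilQ_pow (by omega) i')).congr fun p => by ring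
  · exact (HasSumIn.of_mul_eq pencilP_mul_pencilQ i d j
      (fun i' j' hi' hij' => hasSumIn_pencilP_pow (by omega) i')
      (fun i' j' hi' hij' => hasSumIn_pencilQ_pow (by omega) i')).congr fun p => by ring

end Pencil

-- For `d = 0` these are values of the zeta-function of the root system `C₂`.
theorem zetaG2_mem_adjoin_zetaValues_general {a b c d : ℕ} (hab : 0 < a + b + c)
    (had : 0 < a + d + c) (hbd : 0 < b + d + c) :
    zetaG2 (2 * a) b b (2 * c + 1) d d ∈ Algebra.adjoin ℚ zetaValues := by
  have h := hasSumIn_pencil hab had hbd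
  convert h.tsum_mem using 1
  rw [h.summable.tsum_prod, zetaG2]
  refine tsum_congr fun m => tsum_congr fun n => ?_
  simp only [pencilM, pencilP, pencilQ, pencilZ, invForm, one_div, mul_inv, ← inv_pow]
  push_cast
  ring

theorem zetaG2_mem_adjoin_zetaValues (a b c d : ℕ) (ha : 0 < a) (hb : 0 < b) (hc : 0 < c)
    (hd : 0 < d) :
    zetaG2 (2 * a) b b (2 * c - 1) d d ∈ Algebra.adjoin ℚ zetaValues := by
  rw [show 2 * c - 1 = 2 * (c - 1) + 1 by omega]
  exact zetaG2_mem_adjoin_zetaValues_general (by omega) (by omega) (by omega)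
end

section
/- The special value ζ₂(2,1,1,1,1,1; G₂) equals (1/18)·ζ(2)·ζ(5) − (109/1296)·ζ(7). -/
/-!
Write `f(x, y)` for the summand of `ζ₂(2,1,1,1,1,1; G₂)`. It is odd under the reflections
`(x, y) ↦ (x, -x - y)` and under `(x, y) ↦ (-x, -y)`. The first kills each sum of `f(m, n)` over
all integers `n`; by the second, the quadrants `m, n > 0` and `-m, n > 0` then contribute equally,
so twice the zeta value is the sum of `f(m, n)` over all `m ∈ ℤ` and `n > 0`. For fixed `n` expand
`f(m, n)` in partial fractions in `m`. All poles lie in `½ℤ`, and the differences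
`1/m - 1/(m + j/2)` of simple poles sum to zero over `ℤ`. What remains is the double pole, which
gives a multiple of `ζ(2)/n⁵`, and the omission of the poles themselves, which gives a multiple of
`1/n⁷` depending on the parity of `n`, because `m = -3n/2` is an integer only for even `n`.
-/

open Filter Topology

lemma abs_sub_le_two_mul_abs_mul {R : Type*} [CommRing R] [LinearOrder R]
    [IsStrictOrderedRing R] {a b : R} (ha : 1 ≤ |a|) (hb : 1 ≤ |b|) : |b - a| ≤ 2 * |a * b| := by
  rw [abs_mul]
  nlinarith [abs_sub b a]

lemma tsum_eq_zero_of_comp_equiv_eq_neg {β E : Type*} [AddCommGroup E] [TopologicalSpace E]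
    [IsTopologicalAddGroup E] [T2Space E] [IsAddTorsionFree E] {f : β → E} (e : β ≃ β)
    (h : ∀ b, f (e b) = -f b) : ∑' b, f b = 0 := by
  have := e.tsum_eq f
  simp_rw [h, tsum_neg] at this
  exact neg_eq_self.mp this

section Telescoping

variable {E : Type*} [AddCommGroup E] [TopologicalSpace E] [IsTopologicalAddGroup E] [T2Space E]
  {f : ℤ → E}

lemma hasSum_int_sub_add_one (hf : Tendsto f cofinite (𝓝 0))
    (hs : Summable fun k ↦ f k - f (k + 1)) : HasSum (fun k ↦ f k - f (k + 1)) 0 := by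
  have hIco := SummationFilter.hasSum_symmetricIco_int_iff.mp
    (hs.hasSum.mono_left SummationFilter.LeAtTop.le_atTop)
  simp_rw [Finset.sum_Ico_int_sub] at hIco
  have hlim : Tendsto (fun N : ℕ ↦ f (-N) - f N) atTop (𝓝 (0 - 0)) := by
    rw [← Nat.cofinite_eq_atTop]
    exact (hf.comp (neg_injective.comp Nat.cast_injective).tendsto_cofinite).sub
      (hf.comp Nat.cast_injective.tendsto_cofinite)
  rw [sub_zero] at hlim
  exact tendsto_nhds_unique hIco hlim ▸ hs.hasSum

lemma hasSum_int_sub_add (hf : Tendsto f cofinite (𝓝 0))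
    (hs : Summable fun k ↦ f k - f (k + 1)) (j : ℤ) : HasSum (fun k ↦ f k - f (k + j)) 0 := by
  have shift (i : ℤ) : HasSum (fun k ↦ f (k + i) - f (k + i + 1)) 0 :=
    (Equiv.addRight i).hasSum_iff.mpr (hasSum_int_sub_add_one hf hs)
  induction j with
  | zero => simp
  | succ i ih => simpa [add_assoc] using ih.add (shift i)
  | pred i ih => simpa [add_sub_assoc, add_assoc] using! ih.sub (shift (-i - 1))

end Telescoping

lemma summable_int_one_div_sub_one_div_add (a : ℂ) :
    Summable fun k : ℤ ↦ 1 / (k : ℂ) - 1 / (k + a) := by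
  refine ((EisensteinSeries.summable_linear_sub_mul_linear_add a 0 1).mul_left
    (-a)).congr_cofinite ?_
  have hne (c : ℂ) : ∀ᶠ k : ℤ in cofinite, (k : ℂ) ≠ c :=
    Int.cast_injective.tendsto_cofinite.eventually (eventually_cofinite_ne c)
  filter_upwards [hne 0, hne (-a)] with k hk hka
  rw [← sub_ne_zero, sub_neg_eq_add] at hka
  simp only [Int.cast_zero, Int.cast_one, zero_mul, one_mul, zero_sub, add_comm a]
  field_simp
  ring

-- Subtracting half of the telescoping series for the integer shift `j` leaves a summand that is odd
-- under `k ↦ -j - k`.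
lemma hasSum_int_one_div_sub_one_div_add_half (j : ℤ) :
    HasSum (fun k : ℤ ↦ 1 / (k : ℂ) - 1 / (k + j / 2)) 0 := by
  have hlim : Tendsto (fun k : ℤ ↦ 1 / (k : ℂ)) cofinite (𝓝 0) := by
    simpa using! tendsto_inv₀_cobounded.comp
      (tendsto_norm_atTop_iff_cobounded.mp
        (tendsto_norm_comp_cofinite_atTop_of_isClosedEmbedding Complex.isClosedEmbedding_intCast))
  have hshift : HasSum (fun k : ℤ ↦ 1 / (k : ℂ) - 1 / (k + j)) 0 := by
    simpa using hasSum_int_sub_add hlim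
      (by simpa using summable_int_one_div_sub_one_div_add 1) j
  have hhalf := (summable_int_one_div_sub_one_div_add (j / 2)).hasSum
  have hodd := hhalf.sub (hshift.div_const 2)
  have := tsum_eq_zero_of_comp_equiv_eq_neg (Equiv.subLeft (-j)) (f := fun k : ℤ ↦
    1 / (k : ℂ) - 1 / (k + j / 2) - (1 / (k : ℂ) - 1 / (k + j)) / 2) fun k ↦ by
      simp only [Equiv.subLeft_apply]
      push_cast
      rw [show (-j - k : ℂ) = -(k + j) by ring, show -(k + j : ℂ) + j / 2 = -(k + j / 2) by ring,
        show -(k + j : ℂ) + j = -k by ring]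
      simp only [one_div_neg_eq_neg_one_div]
      ring
  rw [hodd.tsum_eq, zero_div, sub_zero] at this
  rwa [this] at hhalf

lemma hasSum_int_ite_add_half_eq_zero (j : ℤ) :
    HasSum (fun k : ℤ ↦ if (k : ℂ) + j / 2 = 0 then (1 : ℂ) else 0) (if Even j then 1 else 0) := by
  have hiff (k : ℤ) : (k : ℂ) + j / 2 = 0 ↔ j = -2 * k := by
    rw [← @Int.cast_inj ℂ]
    push_cast
    grind
  simp_rw [hiff]
  split_ifs with hj
  · obtain ⟨l, rfl⟩ := hj
    convert! hasSum_ite_eq (-l) (1 : ℂ) using 3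
    lia
  · convert! (hasSum_zero : HasSum (fun _ : ℤ ↦ (0 : ℂ)) 0) using 2
    grind

lemma hasSum_int_one_div_pow_of_even {k : ℕ} (hk : 1 < k) (hk2 : Even k) :
    HasSum (fun m : ℤ ↦ 1 / (m : ℂ) ^ k) (2 * riemannZeta k) := by
  have hs : Summable fun m : ℤ ↦ 1 / (m : ℂ) ^ k :=
    .of_norm ((Real.summable_one_div_int_pow.mpr hk).norm.congr fun m ↦ by simp)
  rw [two_mul_riemannZeta_eq_tsum_int_inv_pow_of_even hk hk2]
  simpa only [one_div] using hs.hasSum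

lemma hasSum_pnat_one_div_pow {k : ℕ} (hk : 1 < k) :
    HasSum (fun n : ℕ+ ↦ 1 / (n : ℂ) ^ k) (riemannZeta k) := by
  have hs : Summable fun n : ℕ ↦ 1 / (n : ℂ) ^ k :=
    .of_norm ((Real.summable_one_div_nat_pow.mpr hk).norm.congr fun n ↦ by simp)
  rw [hasSum_pnat_iff (f := fun n : ℕ ↦ 1 / (n : ℂ) ^ k), zeta_nat_eq_tsum_of_gt_one hk]
  simpa [show k ≠ 0 by lia] using hs.hasSum

lemma hasSum_pnat_ite_even_one_div_pow {k : ℕ} (hk : 1 < k) :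
    HasSum (fun n : ℕ+ ↦ if Even (n : ℕ) then 1 / (n : ℂ) ^ k else 0)
      (1 / 2 ^ k * riemannZeta k) := by
  have hinj : Function.Injective fun n : ℕ+ ↦ 2 * n := mul_right_injective 2
  rw [← hinj.hasSum_iff]
  · convert! (hasSum_pnat_one_div_pow hk).mul_left (1 / 2 ^ k) using 2 with n
    simp [mul_pow, mul_comm]
  · intro n hn
    refine if_neg fun ⟨l, hl⟩ ↦ hn ⟨⟨l, by have := n.pos; lia⟩, PNat.eq ?_⟩
    exact (two_mul l).trans hl.symm

/-- The summand of `ζ₂(2,1,1,1,1,1; G₂)` as a function on `ℂ²`. By the convention `1 / 0 = 0` it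
vanishes on the polar lines, so that sums over all integers silently omit the poles. -/
noncomputable def zetaG2Term (x y : ℂ) : ℂ :=
  1 / (x ^ 2 * y * (x + y) * (x + 2 * y) * (x + 3 * y) * (2 * x + 3 * y))

lemma zetaG2Term_mul_mul (t x y : ℂ) : zetaG2Term (t * x) (t * y) = zetaG2Term x y / t ^ 7 := by
  unfold zetaG2Term
  rw [div_div]
  congr 1
  ring

lemma zetaG2Term_neg_neg (x y : ℂ) : zetaG2Term (-x) (-y) = -zetaG2Term x y := by
  rw [← neg_one_mul x, ← neg_one_mul y, zetaG2Term_mul_mul, Odd.neg_one_pow (by decide), div_neg,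
    div_one]

lemma zetaG2Term_neg_sub (x y : ℂ) : zetaG2Term x (-x - y) = -zetaG2Term x y := by
  unfold zetaG2Term
  rw [← one_div_neg_eq_neg_one_div]
  ring

-- At a pole, where `zetaG2Term` is `0` by convention, the partial fractions evaluate to the
-- constant term of the Laurent expansion; the indicators subtract it.
lemma zetaG2Term_one_right (t : ℂ) :
    zetaG2Term t 1 = 1 / 18 * (1 / t ^ 2)
      - (1 / 2 * (1 / t - 1 / (t + 1)) + 1 / 4 * (1 / t - 1 / (t + 2))
        - 1 / 54 * (1 / t - 1 / (t + 3)) - 16 / 27 * (1 / t - 1 / (t + 3 / 2)))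
      - (145 / 648 * (if t = 0 then 1 else 0) - 3 / 4 * (if t + 1 = 0 then 1 else 0)
        + 3 / 4 * (if t + 2 = 0 then 1 else 0)
        - 17 / 324 * (if t + 3 = 0 then 1 else 0)
        - 32 / 81 * (if t + 3 / 2 = 0 then 1 else 0)) := by
  unfold zetaG2Term
  rcases eq_or_ne t 0 with rfl | h₀
  · norm_num
  rcases eq_or_ne t (-1) with rfl | h₁
  · norm_num
  rcases eq_or_ne t (-2) with rfl | h₂
  · norm_num
  rcases eq_or_ne t (-3) with rfl | h₃
  · norm_num
  rcases eq_or_ne t (-3 / 2) with rfl | h₄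
  · norm_num
  replace h₁ : t + 1 ≠ 0 := by grind
  replace h₂ : t + 2 ≠ 0 := by grind
  replace h₃ : t + 3 ≠ 0 := by grind
  replace h₄ : t + 3 / 2 ≠ 0 := by grind
  have h₅ : t * 2 + 3 ≠ 0 := by grind
  rw [mul_comm 2 t]
  simp only [h₀, h₁, h₂, h₃, h₄, if_false]
  field_simp
  ring

lemma zetaG2Term_eq_partial_fractions (x : ℂ) {y : ℂ} (hy : y ≠ 0) :
    zetaG2Term x y = 1 / 18 * (1 / y ^ 5) * (1 / x ^ 2)
      - 1 / y ^ 6 * (1 / 2 * (1 / x - 1 / (x + y)) + 1 / 4 * (1 / x - 1 / (x + 2 * y))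
        - 1 / 54 * (1 / x - 1 / (x + 3 * y)) - 16 / 27 * (1 / x - 1 / (x + 3 / 2 * y)))
      - 1 / y ^ 7 * (145 / 648 * (if x = 0 then 1 else 0) - 3 / 4 * (if x + y = 0 then 1 else 0)
        + 3 / 4 * (if x + 2 * y = 0 then 1 else 0)
        - 17 / 324 * (if x + 3 * y = 0 then 1 else 0)
        - 32 / 81 * (if x + 3 / 2 * y = 0 then 1 else 0)) := by
  obtain ⟨t, rfl⟩ : ∃ t, x = y * t := ⟨x / y, (mul_div_cancel₀ x hy).symm⟩
  have hscale : zetaG2Term (y * t) y = zetaG2Term t 1 / y ^ 7 := by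
    simpa using zetaG2Term_mul_mul y t 1
  have hfactor (c : ℂ) : y * t + c * y = y * (t + c) := by ring
  rw [hscale, zetaG2Term_one_right, show y * t + y = y * (t + 1) by ring]
  simp only [hfactor, mul_eq_zero, hy, false_or, ← div_div]
  field_simp

lemma norm_zetaG2Term_intCast_le (m n : ℤ) :
    ‖zetaG2Term m n‖ ≤ 2 * (1 / (m : ℝ) ^ 2 * (1 / (n : ℝ) ^ 2)) := by
  let D : ℤ := m ^ 2 * n * (m + n) * (m + 2 * n) * (m + 3 * n) * (2 * m + 3 * n)
  have hD : ‖zetaG2Term m n‖ = 1 / (|D| : ℤ) := by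
    rw [Int.cast_abs, ← Complex.norm_intCast, ← norm_one (α := ℂ), ← norm_div]
    simp [zetaG2Term, D]
  rcases eq_or_ne D 0 with h | h
  · rw [hD, h]
    simp only [abs_zero, Int.cast_zero, div_zero]
    positivity
  obtain ⟨hm, hn, h₁, h₂, h₃, h₄⟩ : m ≠ 0 ∧ n ≠ 0 ∧ m + n ≠ 0 ∧ m + 2 * n ≠ 0 ∧
      m + 3 * n ≠ 0 ∧ 2 * m + 3 * n ≠ 0 := by
    simpa [D, and_assoc] using h
  have hkey : m ^ 2 * n ^ 2 ≤ 2 * |D| := calc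
    m ^ 2 * n ^ 2 = m ^ 2 * |n| * |(m + 2 * n) - (m + n)| := by
      rw [show m + 2 * n - (m + n) = n by ring, mul_assoc, abs_mul_abs_self, sq n]
    _ ≤ m ^ 2 * |n| * (2 * |(m + n) * (m + 2 * n)|) := by
      gcongr
      exact abs_sub_le_two_mul_abs_mul (Int.one_le_abs h₁) (Int.one_le_abs h₂)
    _ ≤ m ^ 2 * |n| * (2 * |(m + n) * (m + 2 * n)|) * |(m + 3 * n) * (2 * m + 3 * n)| :=
      le_mul_of_one_le_right (by positivity) (Int.one_le_abs (mul_ne_zero h₃ h₄))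
    _ = 2 * |D| := by
      simp only [D, abs_mul, abs_pow, sq_abs]
      ring
  have hkey' : (m : ℝ) ^ 2 * n ^ 2 ≤ 2 * (|D| : ℤ) := mod_cast hkey
  have hD0 : (0 : ℝ) < (|D| : ℤ) := mod_cast abs_pos.mpr h
  have hmn : (0 : ℝ) < (m : ℝ) ^ 2 * n ^ 2 :=
    mod_cast mul_pos (sq_pos_of_ne_zero hm) (sq_pos_of_ne_zero hn)
  rwa [hD, one_div_mul_one_div, mul_one_div, div_le_div_iff₀ hD0 hmn, one_mul]

lemma summable_zetaG2Term : Summable fun p : ℤ × ℤ ↦ zetaG2Term p.1 p.2 := by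
  have hsq := Real.summable_one_div_int_pow.mpr one_lt_two
  exact .of_norm_bounded ((hsq.mul_of_nonneg hsq (fun _ ↦ by positivity)
    fun _ ↦ by positivity).mul_left 2) fun p ↦ norm_zetaG2Term_intCast_le p.1 p.2

lemma tsum_pnat_zetaG2Term_neg_left (m : ℤ) :
    ∑' n : ℕ+, zetaG2Term (-m) n = ∑' n : ℕ+, zetaG2Term m n := by
  have hzero : ∑' n : ℤ, zetaG2Term m n = 0 :=
    tsum_eq_zero_of_comp_equiv_eq_neg (Equiv.subLeft (-m)) fun n ↦ by
      simpa using zetaG2Term_neg_sub m n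
  have hneg (n : ℕ+) : zetaG2Term m (-n) = -zetaG2Term (-m) n := by
    rw [← zetaG2Term_neg_neg, neg_neg]
  rw [tsum_int_eq_zero_add_tsum_pnat (summable_zetaG2Term.prod_factor m)] at hzero
  simp only [Int.cast_neg, Int.cast_natCast, hneg, tsum_neg] at hzero
  have : zetaG2Term m (0 : ℤ) = 0 := by simp [zetaG2Term]
  rw [this, zero_add, add_neg_eq_zero] at hzero
  exact hzero.symm

lemma two_mul_tsum_pnat_zetaG2Term :
    2 * ∑' (m : ℕ+) (n : ℕ+), zetaG2Term m n = ∑' (n : ℕ+) (m : ℤ), zetaG2Term m n := by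
  have hinj : Function.Injective fun n : ℕ+ ↦ (n : ℤ) :=
    Nat.cast_injective.comp PNat.coe_injective
  have hpos : Summable fun p : ℕ+ × ℕ+ ↦ zetaG2Term p.1 p.2 :=
    (summable_zetaG2Term.comp_injective (hinj.prodMap hinj)).congr fun p ↦ by simp
  have hneg : Summable fun p : ℕ+ × ℕ+ ↦ zetaG2Term (-p.1) p.2 :=
    (summable_zetaG2Term.comp_injective ((neg_injective.comp hinj).prodMap hinj)).congr
      fun p ↦ by simp
  have hrow (n : ℕ+) : ∑' m : ℤ, zetaG2Term m n =
      ∑' m : ℕ+, zetaG2Term m n + ∑' m : ℕ+, zetaG2Term (-m) n := by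
    have := tsum_int_eq_zero_add_tsum_pnat (summable_zetaG2Term.prod_symm.prod_factor (n : ℤ))
    simpa [zetaG2Term] using this
  have hreflect (m : ℕ+) : ∑' n : ℕ+, zetaG2Term (-m) n = ∑' n : ℕ+, zetaG2Term m n := by
    simpa using tsum_pnat_zetaG2Term_neg_left m
  calc 2 * ∑' (m : ℕ+) (n : ℕ+), zetaG2Term m n
    _ = ∑' (m : ℕ+) (n : ℕ+), zetaG2Term m n + ∑' (m : ℕ+) (n : ℕ+), zetaG2Term (-m) n := by
      simp_rw [hreflect, two_mul]
    _ = ∑' (n : ℕ+) (m : ℕ+), zetaG2Term m n + ∑' (n : ℕ+) (m : ℕ+), zetaG2Term (-m) n := by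
      rw [Summable.tsum_comm (f := fun m n : ℕ+ ↦ zetaG2Term m n) hpos,
        Summable.tsum_comm (f := fun m n : ℕ+ ↦ zetaG2Term (-m) n) hneg]
    _ = ∑' (n : ℕ+) (m : ℤ), zetaG2Term m n := by
      simp_rw [hrow]
      exact (hpos.prod_symm.prod.tsum_add (g := fun n : ℕ+ ↦ ∑' m : ℕ+, zetaG2Term (-m) n)
        hneg.prod_symm.prod).symm

lemma hasSum_int_zetaG2Term {n : ℤ} (hn : n ≠ 0) :
    HasSum (fun m : ℤ ↦ zetaG2Term m n)
      (1 / 9 * riemannZeta 2 * (1 / (n : ℂ) ^ 5) - 37 / 216 * (1 / (n : ℂ) ^ 7)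
        + 32 / 81 * (if Even n then 1 / (n : ℂ) ^ 7 else 0)) := by
  have hdouble := hasSum_int_one_div_pow_of_even one_lt_two even_two
  have hdiff := hasSum_int_one_div_sub_one_div_add_half
  have hsimple := (((hdiff (2 * n)).mul_left (1 / 2)).add ((hdiff (4 * n)).mul_left (1 / 4))).sub
    ((hdiff (6 * n)).mul_left (1 / 54)) |>.sub ((hdiff (3 * n)).mul_left (16 / 27))
  have hite := hasSum_int_ite_add_half_eq_zero
  have hpole := (((hite 0).mul_left (145 / 648)).sub ((hite (2 * n)).mul_left (3 / 4))).add
    ((hite (4 * n)).mul_left (3 / 4)) |>.sub ((hite (6 * n)).mul_left (17 / 324)) |>.sub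
    ((hite (3 * n)).mul_left (32 / 81))
  have hsum := ((hdouble.mul_left (1 / 18 * (1 / (n : ℂ) ^ 5))).sub
    (hsimple.mul_left (1 / (n : ℂ) ^ 6))).sub (hpole.mul_left (1 / (n : ℂ) ^ 7))
  convert! hsum using 1
  · ext m
    rw [zetaG2Term_eq_partial_fractions _ (Int.cast_ne_zero.mpr hn)]
    push_cast
    ring_nf
  · have h3 : Even (3 * n) ↔ Even n := by grind
    have h2 : Even (2 * n) := even_two_mul n
    have h4 : Even (4 * n) := by grind
    have h6 : Even (6 * n) := by grind
    simp only [h3, h2, h4, h6, Even.zero, if_true]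
    push_cast
    split_ifs <;> ring

theorem zetaG2_two_one_one_one_one_one :
    (zetaG2 2 1 1 1 1 1 : ℂ) =
      (1 / 18) * riemannZeta 2 * riemannZeta 5 - (109 / 1296) * riemannZeta 7 := by
  have hterm : (zetaG2 2 1 1 1 1 1 : ℂ) = ∑' (m : ℕ+) (n : ℕ+), zetaG2Term m n := by
    simp [zetaG2, zetaG2Term, Complex.ofReal_tsum]
  have hrow (n : ℕ+) : ∑' m : ℤ, zetaG2Term m n = 1 / 9 * riemannZeta 2 * (1 / (n : ℂ) ^ 5)
      - 37 / 216 * (1 / (n : ℂ) ^ 7) + 32 / 81 * (if Even (n : ℕ) then 1 / (n : ℂ) ^ 7 else 0) := by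
    simpa using! (hasSum_int_zetaG2Term (Int.natCast_ne_zero.mpr n.ne_zero)).tsum_eq
  have h5 := hasSum_pnat_one_div_pow (k := 5) (by norm_num)
  have h7 := hasSum_pnat_one_div_pow (k := 7) (by norm_num)
  have heven := hasSum_pnat_ite_even_one_div_pow (k := 7) (by norm_num)
  have hrows := ((h5.mul_left (1 / 9 * riemannZeta 2)).sub (h7.mul_left (37 / 216))).add
    (heven.mul_left (32 / 81))
  have htwo := two_mul_tsum_pnat_zetaG2Term
  simp_rw [hrow] at htwo
  rw [← hterm, hrows.tsum_eq] at htwo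
  push_cast at htwo
  linear_combination htwo / 2
end

section
/- The special value ζ₂(2,1,1,1,2,2; G₂) equals −(187/324)·ζ(2)·ζ(7) + (11149/11664)·ζ(9). -/
/-!
Let `F(m, n)` be the summand, extended to `m, n ∈ ℤ` by `0` on the walls, where one of the six
linear forms vanishes. The total exponent is odd, so `F(-m, -n) = -F(m, n)`; as the exponents agree
within the pairs `n, m + n` and `m + 3n, 2m + 3n`, which `n ↦ -(m + n)` exchanges up to sign, this
reflection also negates `F`. Hence every row sum `∑_{n ∈ ℤ} F(m, n)` vanishes, `∑_{n ≥ 0} F(m, n)`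
is even in `m`, and the sum of `F` over the half plane `n ≥ 0` is `2 ζ₂`.

In the half plane one can sum over `m ∈ ℤ` first. The partial fractions in `m` are squares, which
give `ζ(2) / n ^ 7`, and differences of simple poles, which telescope to `0`; correcting for the
walls, where the partial fractions do not vanish, gives a rational multiple of `1 / n ^ 9`. Since
the wall `2m + 3n = 0` has an integral point only for even `n`, the two parities are summed
separately.
-/

open Filter Topology Finset Function

section IntegerSums

variable {E : Type*} [AddCommGroup E]

lemma hasSum_of_eq_zero_of_eq_off_finset [TopologicalSpace E] [ContinuousAdd E] {ι : Type*}
    {f g : ι → E} {a : E} {s : Finset ι}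
    (hg : HasSum g a) (hs : ∀ i ∈ s, f i = 0) (hsc : ∀ i ∉ s, f i = g i) :
    HasSum f (a - ∑ i ∈ s, g i) := by
  have hsum : HasSum (f - g) (∑ i ∈ s, (f - g) i) :=
    hasSum_sum_of_ne_finset_zero fun i hi ↦ by simp [hsc i hi]
  have hdiff : ∑ i ∈ s, (f - g) i = -∑ i ∈ s, g i := by
    rw [← sum_neg_distrib]
    exact sum_congr rfl fun i hi ↦ by simp [hs i hi]
  rw [hdiff] at hsum
  simpa only [Pi.sub_apply, add_sub_cancel, ← sub_eq_add_neg] using hg.add hsum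

lemma hasSum_int_sub_add_one_s16 [TopologicalSpace E] [IsTopologicalAddGroup E] [T2Space E]
    {f : ℤ → E} {a b : E} (hf : Summable fun m ↦ f m - f (m + 1)) (hbot : Tendsto f atBot (𝓝 a))
    (htop : Tendsto f atTop (𝓝 b)) :
    HasSum (fun m ↦ f m - f (m + 1)) (a - b) := by
  have hbot' : Tendsto (fun N : ℕ ↦ f (-N)) atTop (𝓝 a) :=
    hbot.comp (tendsto_neg_atTop_atBot.comp tendsto_natCast_atTop_atTop)
  have hpartial : HasSum (fun m ↦ f m - f (m + 1)) (a - b) (SummationFilter.symmetricIco ℤ) := by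
    simp_rw [SummationFilter.hasSum_symmetricIco_int_iff, sum_Ico_int_sub]
    exact hbot'.sub (htop.comp tendsto_natCast_atTop_atTop)
  have hsum : ∑' m, (f m - f (m + 1)) = a - b :=
    HasSum.unique (hf.hasSum.mono_left SummationFilter.le_atTop) hpartial
  exact hsum ▸ hf.hasSum

lemma tsum_half_plane_eq_two_nsmul [UniformSpace E] [IsUniformAddGroup E] [CompleteSpace E]
    [T2Space E] {F : ℤ → ℤ → E} (hF : Summable (uncurry F))
    (hneg : ∀ m n, F (-m) (-n) = -F m n) (hrow : ∀ m, ∑' n, F m n = 0)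
    (hleft : ∀ n, F 0 n = 0) (hright : ∀ m, F m 0 = 0) :
    ∑' n : ℕ, ∑' m : ℤ, F m n = 2 • ∑' m : ℕ, ∑' n : ℕ, F m n := by
  have hhalf : Summable (uncurry fun (m : ℤ) (n : ℕ) ↦ F m n) :=
    (hF.comp_injective (injective_id.prodMap (Nat.cast_injective (R := ℤ)))).congr fun _ ↦ rfl
  have heven (m : ℤ) : ∑' n : ℕ, F (-m) n = ∑' n : ℕ, F m n := by
    have hrow_neg (n : ℕ) : F m (-n) = -F (-m) n := by rw [← hneg, neg_neg]
    have hsplit := Summable.tsum_of_nat_of_neg (f := F m) (hhalf.prod_factor m)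
      (by simpa only [hrow_neg, uncurry] using (hhalf.prod_factor (-m)).neg)
    simp only [hrow, hright, hrow_neg, tsum_neg, sub_zero] at hsplit
    exact (add_neg_eq_zero.1 hsplit.symm).symm
  have hpos : Summable fun m : ℕ ↦ ∑' n : ℕ, F m n := hhalf.prod.comp_injective Nat.cast_injective
  rw [hhalf.tsum_comm, Summable.tsum_of_nat_of_neg hpos (by simpa only [heven] using hpos)]
  simp only [heven, hleft, tsum_zero, sub_zero, two_nsmul]

end IntegerSums

section ZetaSums

variable {k : ℕ}

lemma hasSum_inv_natCast_pow (hk : 1 < k) :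
    HasSum (fun n : ℕ ↦ ((n : ℂ) ^ k)⁻¹) (riemannZeta k) := by
  have hs : Summable fun n : ℕ ↦ ((n : ℂ) ^ k)⁻¹ := .of_norm (by simp [hk])
  simpa [zeta_nat_eq_tsum_of_gt_one hk] using hs.hasSum

lemma hasSum_inv_two_mul_natCast_pow (hk : 1 < k) :
    HasSum (fun n : ℕ ↦ (((2 * n : ℕ) : ℂ) ^ k)⁻¹) ((2 ^ k)⁻¹ * riemannZeta k) := by
  simpa [mul_pow, mul_comm] using (hasSum_inv_natCast_pow hk).mul_left (2 ^ k)⁻¹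

lemma hasSum_inv_two_mul_add_one_natCast_pow (hk : 1 < k) :
    HasSum (fun n : ℕ ↦ (((2 * n + 1 : ℕ) : ℂ) ^ k)⁻¹) ((1 - (2 ^ k)⁻¹) * riemannZeta k) := by
  have hzeta := hasSum_inv_natCast_pow hk
  have hodd : Summable fun n : ℕ ↦ (((2 * n + 1 : ℕ) : ℂ) ^ k)⁻¹ :=
    hzeta.summable.comp_injective (i := fun n ↦ 2 * n + 1) fun _ _ h ↦ by simpa using h
  have hsplit := ((hasSum_inv_two_mul_natCast_pow hk).even_add_odd
    (f := fun n : ℕ ↦ ((n : ℂ) ^ k)⁻¹) hodd.hasSum).unique hzeta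
  rw [sub_mul, one_mul, sub_eq_of_eq_add' hsplit.symm]
  exact hodd.hasSum

lemma hasSum_inv_intCast_pow (hk : 2 ≤ k) (hk' : Even k) :
    HasSum (fun m : ℤ ↦ ((m : ℂ) ^ k)⁻¹) (2 * riemannZeta k) := by
  have hs : Summable fun m : ℤ ↦ ((m : ℂ) ^ k)⁻¹ := by
    simpa using EisensteinSeries.linear_right_summable 0 0 (k := k) (mod_cast hk)
  exact two_mul_riemannZeta_eq_tsum_int_inv_pow_of_even hk hk' ▸ hs.hasSum

lemma hasSum_inv_two_mul_intCast_add_pow_of_even (hk : 2 ≤ k) (hk' : Even k) {c : ℤ}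
    (hc : Even c) :
    HasSum (fun m : ℤ ↦ ((2 * m + c : ℂ) ^ k)⁻¹) (2 * ((2 ^ k)⁻¹ * riemannZeta k)) := by
  obtain ⟨d, rfl⟩ := hc.two_dvd
  have hscale (m : ℤ) :
      ((2 * m + (2 * d : ℤ) : ℂ) ^ k)⁻¹ = (2 ^ k)⁻¹ * (((m + d : ℤ) : ℂ) ^ k)⁻¹ := by
    rw [← mul_inv, ← mul_pow]
    push_cast
    rw [mul_add]
  rw [funext hscale, mul_left_comm]
  exact ((Equiv.addRight d).hasSum_iff.2 (hasSum_inv_intCast_pow hk hk')).mul_left _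

lemma hasSum_inv_two_mul_intCast_add_pow_of_odd (hk : 2 ≤ k) (hk' : Even k) {c : ℤ}
    (hc : Odd c) :
    HasSum (fun m : ℤ ↦ ((2 * m + c : ℂ) ^ k)⁻¹) (2 * (1 - (2 ^ k)⁻¹) * riemannZeta k) := by
  obtain ⟨d, rfl⟩ := hc
  have hnat := hasSum_inv_two_mul_add_one_natCast_pow hk
  have hone : HasSum (fun m : ℤ ↦ ((2 * m + 1 : ℂ) ^ k)⁻¹)
      ((1 - (2 ^ k)⁻¹) * riemannZeta k + (1 - (2 ^ k)⁻¹) * riemannZeta k) := by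
    refine .of_nat_of_neg_add_one (by simpa using hnat) ?_
    convert hnat using 3 with n
    rw [← hk'.neg_pow]
    push_cast
    ring
  convert (Equiv.addRight d).hasSum_iff.2 hone using 1
  · ext m
    simp [mul_add, add_assoc]
  · ring

lemma hasSum_inv_intCast_sub_inv_add_natCast (d : ℕ) :
    HasSum (fun m : ℤ ↦ (m : ℂ)⁻¹ - (m + d : ℂ)⁻¹) 0 := by
  have hs : Summable fun m : ℤ ↦ (m : ℂ)⁻¹ - ((m + 1 : ℤ) : ℂ)⁻¹ := by
    refine (EisensteinSeries.summable_linear_right_add_one_mul_linear_right 0 0 0).congr_cofinite ?_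
    filter_upwards [(Set.toFinite {0, -1}).compl_mem_cofinite] with m hm
    obtain ⟨h0, h1⟩ : m ≠ 0 ∧ m + 1 ≠ 0 := by simpa [eq_neg_iff_add_eq_zero] using hm
    rw [inv_sub_inv (mod_cast h0) (mod_cast h1)]
    simp [div_eq_mul_inv, mul_comm]
  have ⟨hbot, htop⟩ : Tendsto (fun m : ℤ ↦ (m : ℂ)⁻¹) atBot (𝓝 0) ∧
      Tendsto (fun m : ℤ ↦ (m : ℂ)⁻¹) atTop (𝓝 0) := by
    have hcob : Tendsto (fun m : ℤ ↦ (m : ℝ)⁻¹) cofinite (𝓝 0) :=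
      tendsto_inv₀_cobounded.comp
        (Metric.cobounded_eq_cocompact (α := ℝ) ▸ Int.tendsto_coe_cofinite)
    simpa using hcob.ofReal
  have hstep := hasSum_int_sub_add_one_s16 hs hbot htop
  induction d with
  | zero => simp
  | succ d ih =>
    simpa [add_assoc] using ih.add ((Equiv.addRight (d : ℤ)).hasSum_iff.2 hstep)

end ZetaSums

section Summand

variable {K : Type*} [Field K]

/-- The general term of `ζ₂(s₁,…,s₆;G₂)` over a field, extended by the junk value `0` to the walls,
where one of the six linear forms with nonzero exponent vanishes. -/
def g2Term (s₁ s₂ s₃ s₄ s₅ s₆ : ℕ) (x y : K) : K :=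
  (x ^ s₁ * y ^ s₂ * (x + y) ^ s₃ * (x + 2 * y) ^ s₄ * (x + 3 * y) ^ s₅ *
    (2 * x + 3 * y) ^ s₆)⁻¹

variable {s₁ s₂ s₃ s₄ s₅ s₆ : ℕ}

lemma g2Term_zero_left (hs₁ : s₁ ≠ 0) (y : K) : g2Term s₁ s₂ s₃ s₄ s₅ s₆ 0 y = 0 := by
  simp [g2Term, hs₁]

lemma g2Term_zero_right (hs₂ : s₂ ≠ 0) (x : K) : g2Term s₁ s₂ s₃ s₄ s₅ s₆ x 0 = 0 := by
  simp [g2Term, hs₂]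

lemma g2Term_neg_neg (x y : K) :
    g2Term s₁ s₂ s₃ s₄ s₅ s₆ (-x) (-y) =
      (-1) ^ (s₁ + s₂ + s₃ + s₄ + s₅ + s₆) * g2Term s₁ s₂ s₃ s₄ s₅ s₆ x y := by
  simp only [g2Term, mul_neg, ← neg_add, neg_pow x, neg_pow y, neg_pow (_ + _), mul_inv,
    ← inv_pow, inv_neg_one]
  ring

lemma g2Term_neg_add (x y : K) :
    g2Term s₁ s₂ s₃ s₄ s₅ s₆ x (-(x + y)) =
      (-1) ^ (s₂ + s₃ + s₄ + s₅ + s₆) * g2Term s₁ s₃ s₂ s₄ s₆ s₅ x y := by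
  have h₃ : x + -(x + y) = -y := by ring
  have h₄ : x + 2 * -(x + y) = -(x + 2 * y) := by ring
  have h₅ : x + 3 * -(x + y) = -(2 * x + 3 * y) := by ring
  have h₆ : 2 * x + 3 * -(x + y) = -(x + 3 * y) := by ring
  simp only [g2Term, h₃, h₄, h₅, h₆, neg_pow y, neg_pow (_ + _), mul_inv, ← inv_pow, inv_neg_one]
  ring

lemma norm_inv_intCast_le_one (a : ℤ) : ‖(a : ℂ)⁻¹‖ ≤ 1 := by
  rcases eq_or_ne a 0 with rfl | ha
  · simp
  · rw [norm_inv, Complex.norm_intCast]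
    exact inv_le_one_of_one_le₀ (mod_cast Int.one_le_abs ha)

lemma norm_inv_intCast_mul_inv_intCast_le {a b : ℤ} (hab : a ≠ b) :
    ‖(a : ℂ)⁻¹ * (b : ℂ)⁻¹‖ ≤ 2 * ‖((b - a : ℤ) : ℂ)⁻¹‖ := by
  rcases eq_or_ne a 0 with rfl | ha
  · simp
  rcases eq_or_ne b 0 with rfl | hb
  · simp
  have hsub : ((b - a : ℤ) : ℂ) ≠ 0 := mod_cast sub_ne_zero.2 hab.symm
  have hsplit : (a : ℂ)⁻¹ * (b : ℂ)⁻¹ = ((a : ℂ)⁻¹ - (b : ℂ)⁻¹) * ((b - a : ℤ) : ℂ)⁻¹ := by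
    rw [inv_sub_inv (mod_cast ha) (mod_cast hb), ← Int.cast_sub, div_mul_eq_mul_div,
      mul_inv_cancel₀ hsub, one_div, mul_inv]
  rw [hsplit, norm_mul]
  gcongr
  linarith [norm_sub_le (a : ℂ)⁻¹ (b : ℂ)⁻¹, norm_inv_intCast_le_one a, norm_inv_intCast_le_one b]

lemma norm_g2Term_le (hs₁ : 2 ≤ s₁) (hs₂ : s₂ ≠ 0) (hs₃ : s₃ ≠ 0) (hs₄ : s₄ ≠ 0) (m n : ℤ) :
    ‖g2Term s₁ s₂ s₃ s₄ s₅ s₆ (m : ℂ) n‖ ≤ 2 * (‖(m : ℂ)⁻¹‖ ^ 2 * ‖(n : ℂ)⁻¹‖ ^ 2) := by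
  rcases eq_or_ne n 0 with rfl | hn
  · simp [g2Term_zero_right hs₂]
  have hle (a : ℤ) : ‖(a : ℂ)⁻¹‖ ≤ 1 := norm_inv_intCast_le_one a
  have hprod : ‖((m + n : ℤ) : ℂ)⁻¹‖ * ‖((m + 2 * n : ℤ) : ℂ)⁻¹‖ ≤ 2 * ‖(n : ℂ)⁻¹‖ := by
    simpa [two_mul, ← add_assoc, hn] using
      norm_inv_intCast_mul_inv_intCast_le (a := m + n) (b := m + 2 * n) (by grind)
  have hm : ‖(m : ℂ)⁻¹‖ ^ s₁ ≤ ‖(m : ℂ)⁻¹‖ ^ 2 :=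
    pow_le_pow_of_le_one (norm_nonneg _) (hle m) hs₁
  calc ‖g2Term s₁ s₂ s₃ s₄ s₅ s₆ (m : ℂ) n‖
      = ‖(m : ℂ)⁻¹‖ ^ s₁ * ‖(n : ℂ)⁻¹‖ ^ s₂ * ‖((m + n : ℤ) : ℂ)⁻¹‖ ^ s₃ *
          ‖((m + 2 * n : ℤ) : ℂ)⁻¹‖ ^ s₄ * ‖((m + 3 * n : ℤ) : ℂ)⁻¹‖ ^ s₅ *
          ‖((2 * m + 3 * n : ℤ) : ℂ)⁻¹‖ ^ s₆ := by
        simp only [g2Term, mul_inv, norm_mul, ← inv_pow, norm_pow]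
        norm_cast
    _ ≤ ‖(m : ℂ)⁻¹‖ ^ 2 * ‖(n : ℂ)⁻¹‖ * ‖((m + n : ℤ) : ℂ)⁻¹‖ * ‖((m + 2 * n : ℤ) : ℂ)⁻¹‖ *
          1 * 1 := by
        gcongr
        · exact pow_le_of_le_one (norm_nonneg _) (hle _) hs₂
        · exact pow_le_of_le_one (norm_nonneg _) (hle _) hs₃
        · exact pow_le_of_le_one (norm_nonneg _) (hle _) hs₄
        · exact pow_le_one₀ (norm_nonneg _) (hle _)
        · exact pow_le_one₀ (norm_nonneg _) (hle _)
    _ = ‖(m : ℂ)⁻¹‖ ^ 2 * ‖(n : ℂ)⁻¹‖ *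
          (‖((m + n : ℤ) : ℂ)⁻¹‖ * ‖((m + 2 * n : ℤ) : ℂ)⁻¹‖) := by ring
    _ ≤ ‖(m : ℂ)⁻¹‖ ^ 2 * ‖(n : ℂ)⁻¹‖ * (2 * ‖(n : ℂ)⁻¹‖) := by gcongr
    _ = 2 * (‖(m : ℂ)⁻¹‖ ^ 2 * ‖(n : ℂ)⁻¹‖ ^ 2) := by ring

lemma summable_g2Term (hs₁ : 2 ≤ s₁) (hs₂ : s₂ ≠ 0) (hs₃ : s₃ ≠ 0) (hs₄ : s₄ ≠ 0) :
    Summable (uncurry fun m n : ℤ ↦ g2Term s₁ s₂ s₃ s₄ s₅ s₆ (m : ℂ) n) := by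
  have hsq : Summable fun m : ℤ ↦ ‖(m : ℂ)⁻¹‖ ^ 2 := by
    simpa using Real.summable_one_div_int_pow.2 one_lt_two
  have hbound := (hsq.mul_of_nonneg hsq (fun _ ↦ sq_nonneg _) fun _ ↦ sq_nonneg _).mul_left 2
  exact hbound.of_norm_bounded fun p ↦ norm_g2Term_le hs₁ hs₂ hs₃ hs₄ p.1 p.2

lemma coe_zetaG2_eq_tsum (hs₁ : s₁ ≠ 0) (hs₂ : s₂ ≠ 0) :
    (zetaG2 s₁ s₂ s₃ s₄ s₅ s₆ : ℂ) =
      ∑' m : ℕ, ∑' n : ℕ, g2Term s₁ s₂ s₃ s₄ s₅ s₆ (m : ℂ) n := by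
  have hinner (m : ℕ) := tsum_pnat_eq_tsum_of_eq_zero
    (f := fun n : ℕ ↦ g2Term s₁ s₂ s₃ s₄ s₅ s₆ (m : ℂ) n) (by simp [g2Term_zero_right hs₂])
  have houter := tsum_pnat_eq_tsum_of_eq_zero
    (f := fun m : ℕ ↦ ∑' n : ℕ, g2Term s₁ s₂ s₃ s₄ s₅ s₆ (m : ℂ) n)
    (by simp [g2Term_zero_left hs₁])
  rw [← houter]
  simp_rw [← hinner, zetaG2, Complex.ofReal_tsum, g2Term]
  push_cast
  simp only [one_div]

lemma tsum_g2Term_eq_zero (hs₄ : Odd s₄) (a b : ℕ) (m : ℤ) :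
    ∑' n : ℤ, g2Term s₁ a a s₄ b b (m : ℂ) n = 0 := by
  have hreflect (n : ℤ) :
      g2Term s₁ a a s₄ b b (m : ℂ) ((-m - n : ℤ) : ℂ) = -g2Term s₁ a a s₄ b b (m : ℂ) n := by
    have hodd : Odd (a + a + s₄ + b + b) := by grind
    have hsum : ((-m - n : ℤ) : ℂ) = -(m + n) := by push_cast; ring
    rw [hsum, g2Term_neg_add, hodd.neg_one_pow, neg_one_mul]
  have hneg := (Equiv.subLeft (-m)).tsum_eq fun n : ℤ ↦ g2Term s₁ a a s₄ b b (m : ℂ) n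
  simp only [Equiv.subLeft_apply, hreflect, tsum_neg] at hneg
  exact self_eq_neg.1 hneg.symm

lemma two_mul_zetaG2_eq_tsum (hs₁ : 2 ≤ s₁) (hs₁' : Even s₁) (hs₄ : Odd s₄) {a : ℕ}
    (ha : a ≠ 0) (b : ℕ) :
    2 * (zetaG2 s₁ a a s₄ b b : ℂ) = ∑' n : ℕ, ∑' m : ℤ, g2Term s₁ a a s₄ b b (m : ℂ) n := by
  have hs₁_ne : s₁ ≠ 0 := by omega
  have hodd : Odd (s₁ + a + a + s₄ + b + b) := by grind
  have hplane := tsum_half_plane_eq_two_nsmul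
    (summable_g2Term (s₅ := b) (s₆ := b) hs₁ ha ha hs₄.pos.ne')
    (fun m n ↦ by simp [g2Term_neg_neg, hodd.neg_one_pow]) (tsum_g2Term_eq_zero hs₄ a b)
    (fun n ↦ by simp [g2Term_zero_left hs₁_ne]) (fun m ↦ by simp [g2Term_zero_right ha])
  simpa [coe_zetaG2_eq_tsum hs₁_ne ha, eq_comm] using hplane

end Summand

section PartialFraction

variable {K : Type*} [Field K]

/-- The partial fraction decomposition in `x` of `g2Term 2 1 1 1 2 2 x y`; the two may differ on
the walls, where this one need not vanish. -/
def g2PartialFraction (x y : K) : K :=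
  1 / 162 * (y ^ 7)⁻¹ * ((x ^ 2)⁻¹ + ((x + 3 * y) ^ 2)⁻¹) -
    64 / 81 * (y ^ 7)⁻¹ * ((2 * x + 3 * y) ^ 2)⁻¹ -
    7 / 324 * (y ^ 8)⁻¹ * (x⁻¹ - (x + 3 * y)⁻¹) +
    1 / 4 * (y ^ 8)⁻¹ * ((x + y)⁻¹ - (x + 2 * y)⁻¹)

lemma g2Term_211122_eq_g2PartialFraction [CharZero K] {x y : K} (hy : y ≠ 0)
    (h₁ : x ≠ 0) (h₃ : x + y ≠ 0) (h₄ : x + 2 * y ≠ 0) (h₅ : x + 3 * y ≠ 0)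
    (h₆ : 2 * x + 3 * y ≠ 0) :
    g2Term 2 1 1 1 2 2 x y = g2PartialFraction x y := by
  rw [g2Term, g2PartialFraction]
  -- As compound terms the linear forms are not matched with their nonvanishing by `field_simp`.
  generalize hb : x + y = b at *
  generalize hc : x + 2 * y = c at *
  generalize hd : x + 3 * y = d at *
  generalize he : 2 * x + 3 * y = e at *
  field_simp
  rw [← hb, ← hc, ← hd, ← he]
  ring

lemma g2PartialFraction_mul_mul (x y t : K) :
    g2PartialFraction (x * t) (y * t) = g2PartialFraction x y * (t ^ 9)⁻¹ := by
  simp only [g2PartialFraction, ← mul_assoc, ← add_mul, mul_pow, mul_inv]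
  ring

lemma sum_image_mul_g2PartialFraction {t : ℤ} (ht : t ≠ 0) (s : Finset ℤ) (y : K) :
    ∑ m ∈ s.image (· * t), g2PartialFraction (m : K) (y * t) =
      (∑ i ∈ s, g2PartialFraction (i : K) y) * ((t : K) ^ 9)⁻¹ := by
  rw [sum_image fun _ _ _ _ h ↦ mul_right_cancel₀ ht h, sum_mul]
  simp only [Int.cast_mul, g2PartialFraction_mul_mul]

lemma hasSum_g2PartialFraction {S : ℂ} (n : ℕ)
    (hS : HasSum (fun m : ℤ ↦ ((2 * m + 3 * n : ℂ) ^ 2)⁻¹) S) :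
    HasSum (fun m : ℤ ↦ g2PartialFraction (m : ℂ) n)
      ((2 / 81 * riemannZeta 2 - 64 / 81 * S) * ((n : ℂ) ^ 7)⁻¹) := by
  have hsq := hasSum_inv_intCast_pow le_rfl even_two
  have hsq_shift : HasSum (fun m : ℤ ↦ ((m + 3 * n : ℂ) ^ 2)⁻¹) (2 * riemannZeta 2) := by
    simpa [comp_def] using (Equiv.addRight (3 * n : ℤ)).hasSum_iff.2 hsq
  have htel : HasSum (fun m : ℤ ↦ (m : ℂ)⁻¹ - (m + 3 * n : ℂ)⁻¹) 0 := by
    simpa using hasSum_inv_intCast_sub_inv_add_natCast (3 * n)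
  have htel_shift : HasSum (fun m : ℤ ↦ (m + n : ℂ)⁻¹ - (m + 2 * n : ℂ)⁻¹) 0 := by
    simpa [comp_def, two_mul, add_assoc] using
      (Equiv.addRight (n : ℤ)).hasSum_iff.2 (hasSum_inv_intCast_sub_inv_add_natCast n)
  convert! ((((hsq.add hsq_shift).mul_left (1 / 162 * ((n : ℂ) ^ 7)⁻¹)).sub
    (hS.mul_left (64 / 81 * ((n : ℂ) ^ 7)⁻¹))).sub
    (htel.mul_left (7 / 324 * ((n : ℂ) ^ 8)⁻¹))).add
    (htel_shift.mul_left (1 / 4 * ((n : ℂ) ^ 8)⁻¹)) using 1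
  push_cast
  ring

lemma hasSum_g2Term_211122 {S : ℂ} {n : ℕ} (hn : n ≠ 0)
    (hS : HasSum (fun m : ℤ ↦ ((2 * m + 3 * n : ℂ) ^ 2)⁻¹) S) {s : Finset ℤ}
    (hs : ∀ m : ℤ, m ∈ s ↔
      m = 0 ∨ m + n = 0 ∨ m + 2 * n = 0 ∨ m + 3 * n = 0 ∨ 2 * m + 3 * n = 0) :
    HasSum (fun m : ℤ ↦ g2Term 2 1 1 1 2 2 (m : ℂ) n)
      ((2 / 81 * riemannZeta 2 - 64 / 81 * S) * ((n : ℂ) ^ 7)⁻¹ -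
        ∑ m ∈ s, g2PartialFraction (m : ℂ) n) := by
  refine hasSum_of_eq_zero_of_eq_off_finset (hasSum_g2PartialFraction n hS) (fun m hm ↦ ?_)
    fun m hm ↦ ?_
  · have hwall : (m : ℂ) = 0 ∨ (m + n : ℂ) = 0 ∨ (m + 2 * n : ℂ) = 0 ∨ (m + 3 * n : ℂ) = 0 ∨
        (2 * m + 3 * n : ℂ) = 0 := mod_cast (hs m).1 hm
    rcases hwall with h | h | h | h | h <;> simp [g2Term, h]
  · obtain ⟨h₁, h₃, h₄, h₅, h₆⟩ : (m : ℂ) ≠ 0 ∧ (m + n : ℂ) ≠ 0 ∧ (m + 2 * n : ℂ) ≠ 0 ∧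
        (m + 3 * n : ℂ) ≠ 0 ∧ (2 * m + 3 * n : ℂ) ≠ 0 := by
      simpa only [← not_or] using mod_cast mt (hs m).2 hm
    exact g2Term_211122_eq_g2PartialFraction (mod_cast hn) h₁ h₃ h₄ h₅ h₆

lemma hasSum_g2Term_211122_of_odd {n : ℕ} (hn : Odd n) :
    HasSum (fun m : ℤ ↦ g2Term 2 1 1 1 2 2 (m : ℂ) n)
      (-(94 / 81) * riemannZeta 2 * ((n : ℂ) ^ 7)⁻¹ + 5569 / 2916 * ((n : ℂ) ^ 9)⁻¹) := by
  have hn₀ : n ≠ 0 := hn.pos.ne'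
  let walls : Finset ℤ := {0, -1, -2, -3}
  have hS : HasSum (fun m : ℤ ↦ ((2 * m + 3 * n : ℂ) ^ 2)⁻¹)
      (2 * (1 - (2 ^ 2)⁻¹) * riemannZeta 2) := by
    simpa using hasSum_inv_two_mul_intCast_add_pow_of_odd le_rfl even_two
      (c := 3 * n) (by grind)
  have hunit : ∑ i ∈ walls, g2PartialFraction (i : ℂ) 1 = -(5569 / 2916) := by
    norm_num [walls, g2PartialFraction]
  have hcorr := sum_image_mul_g2PartialFraction (t := n) (mod_cast hn₀) walls (1 : ℂ)
  rw [hunit, Int.cast_natCast, one_mul] at hcorr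
  convert! hasSum_g2Term_211122 hn₀ hS (s := walls.image (· * (n : ℤ))) fun m ↦ ?_ using 1
  · rw [hcorr]
    ring
  · simp only [walls, mem_image, mem_insert, mem_singleton]
    grind

lemma hasSum_g2Term_211122_of_even {n : ℕ} (hn : Even n) :
    HasSum (fun m : ℤ ↦ g2Term 2 1 1 1 2 2 (m : ℂ) n)
      (-(10 / 27) * riemannZeta 2 * ((n : ℂ) ^ 7)⁻¹ + 2795 / 972 * ((n : ℂ) ^ 9)⁻¹) := by
  rcases eq_or_ne n 0 with rfl | hn₀
  · simp [g2Term]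
  obtain ⟨j, rfl⟩ := hn.two_dvd
  let walls : Finset ℤ := {0, -2, -3, -4, -6}
  have hS : HasSum (fun m : ℤ ↦ ((2 * m + 3 * (2 * j : ℕ) : ℂ) ^ 2)⁻¹)
      (2 * ((2 ^ 2)⁻¹ * riemannZeta 2)) := by
    simpa using hasSum_inv_two_mul_intCast_add_pow_of_even le_rfl even_two
      (c := 3 * (2 * j : ℕ)) (by grind)
  have hunit : ∑ i ∈ walls, g2PartialFraction (i : ℂ) 2 = -(2795 / 972) * (2 ^ 9)⁻¹ := by
    norm_num [walls, g2PartialFraction]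
  have hcorr := sum_image_mul_g2PartialFraction (t := j) (by grind) walls (2 : ℂ)
  rw [hunit, Int.cast_natCast, mul_assoc, ← mul_inv, ← mul_pow, ← Nat.cast_ofNat,
    ← Nat.cast_mul] at hcorr
  convert! hasSum_g2Term_211122 hn₀ hS (s := walls.image (· * (j : ℤ))) fun m ↦ ?_ using 1
  · rw [hcorr]
    ring
  · simp only [walls, mem_image, mem_insert, mem_singleton]
    grind

lemma hasSum_tsum_g2Term_211122 :
    HasSum (fun n : ℕ ↦ ∑' m : ℤ, g2Term 2 1 1 1 2 2 (m : ℂ) n)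
      (-(187 / 162) * riemannZeta 2 * riemannZeta 7 + 11149 / 5832 * riemannZeta 9) := by
  have heven := ((hasSum_inv_two_mul_natCast_pow (k := 7) (by simp)).mul_left
    (-(10 / 27) * riemannZeta 2)).add
    ((hasSum_inv_two_mul_natCast_pow (k := 9) (by simp)).mul_left (2795 / 972))
  have hodd := ((hasSum_inv_two_mul_add_one_natCast_pow (k := 7) (by simp)).mul_left
    (-(94 / 81) * riemannZeta 2)).add
    ((hasSum_inv_two_mul_add_one_natCast_pow (k := 9) (by simp)).mul_left (5569 / 2916))
  convert! HasSum.even_add_odd (f := fun n : ℕ ↦ ∑' m : ℤ, g2Term 2 1 1 1 2 2 (m : ℂ) n)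
    (heven.congr_fun fun n ↦ (hasSum_g2Term_211122_of_even (even_two_mul n)).tsum_eq)
    (hodd.congr_fun fun n ↦ (hasSum_g2Term_211122_of_odd (odd_two_mul_add_one n)).tsum_eq)
    using 1
  push_cast
  ring

end PartialFraction

theorem zetaG2_211122 :
    (zetaG2 2 1 1 1 2 2 : ℂ) =
      -(187 / 324) * riemannZeta 2 * riemannZeta 7 + (11149 / 11664) * riemannZeta 9 := by
  have htwo := two_mul_zetaG2_eq_tsum le_rfl even_two odd_one one_ne_zero 2
  rw [hasSum_tsum_g2Term_211122.tsum_eq] at htwo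
  linear_combination htwo / 2
end

section
/- The special value ζ₂(4,2,2,1,1,1; G₂) equals (1/18)·ζ(4)·ζ(7) + (595/648)·ζ(2)·ζ(9) − (73201/46656)·ζ(11). -/
/-!
The summand, extended to `ℤ × ℤ` by `1 / 0 = 0`, is odd and changes sign under the reflection
`(m, n) ↦ (m, -m - n)` of the Weyl group. The reflection makes the sum over a vertical line
`{m} × ℤ` vanish, so the sums over the quadrants `m, n > 0` and `m > 0 > n` are opposite; by oddness
the former equals the sum over `m < 0 < n`. Hence twice the zeta value is the sum over the upper
half plane `ℤ × ℕ+`. Its rows are evaluated by partial fractions in `t = m / n`: the simple poles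
contribute nothing, lying in `½ℤ`, nor does the triple pole, by parity; the double and quadruple
poles contribute `ζ(2)` and `ζ(4)`, and the points of a row at which the summand was set to `0`
contribute the `ζ(11)` term.
-/

open Filter Topology

section Series

theorem tsum_eq_zero_of_comp_equiv_eq_neg_s17 {α : Type*} {f : α → ℝ} (σ : α ≃ α)
    (h : ∀ a, f (σ a) = -f a) : ∑' a, f a = 0 := by
  have hneg : ∑' a, f a = -∑' a, f a := by
    rw [← tsum_neg, ← σ.tsum_eq f]
    exact tsum_congr h
  exact self_eq_neg.mp hneg

theorem two_mul_tsum_pnat_eq_tsum_pnat_tsum_int {f : ℤ → ℤ → ℝ}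
    (hf : Summable fun p : ℤ × ℤ => f p.1 p.2) (h_left : ∀ n, f 0 n = 0) (h_right : ∀ m, f m 0 = 0)
    (h_neg : ∀ m n, f (-m) (-n) = -f m n) (h_refl : ∀ m n, f m (-m - n) = -f m n) :
    2 * ∑' (m : ℕ+) (n : ℕ+), f m n = ∑' (n : ℕ+) (m : ℤ), f m n := by
  have h_inj : Function.Injective fun n : ℕ+ => (n : ℤ) := fun a b hab => by simpa using hab
  have h_pos : Summable fun p : ℕ+ × ℕ+ => f p.1 p.2 :=
    hf.comp_injective (h_inj.prodMap h_inj)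
  have h_mixed : Summable fun p : ℕ+ × ℕ+ => f p.1 (-p.2) :=
    hf.comp_injective (h_inj.prodMap (neg_injective.comp h_inj))
  have h_line (m : ℕ+) : ∑' n : ℕ+, f m n = -∑' n : ℕ+, f m (-n) := by
    have h_zero := tsum_eq_zero_of_comp_equiv_eq_neg_s17 (Equiv.subLeft (-(m : ℤ))) (h_refl m)
    rw [tsum_int_eq_zero_add_tsum_pnat (hf.prod_factor (m : ℤ)), h_right, zero_add] at h_zero
    exact eq_neg_of_add_eq_zero_left h_zero
  have h_col (n : ℕ+) : Summable fun m : ℤ => f m n := hf.prod_symm.prod_factor (n : ℤ)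
  have h_row (n : ℕ+) : ∑' m : ℤ, f m n = ∑' m : ℕ+, f m n - ∑' m : ℕ+, f m (-n) := by
    rw [tsum_int_eq_zero_add_tsum_pnat (h_col n), h_left, zero_add,
      sub_eq_add_neg, ← tsum_neg]
    simp only [← h_neg, neg_neg]
  have h_quadrants : ∑' (n : ℕ+) (m : ℕ+), f m (-n) = -∑' (m : ℕ+) (n : ℕ+), f m n := by
    rw [h_mixed.tsum_comm (f := fun m n : ℕ+ => f m (-n)), ← tsum_neg]
    simp only [h_line, neg_neg]
  calc 2 * ∑' (m : ℕ+) (n : ℕ+), f m n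
      = ∑' (n : ℕ+) (m : ℕ+), f m n - ∑' (n : ℕ+) (m : ℕ+), f m (-n) := by
        rw [h_quadrants, h_pos.tsum_comm (f := fun m n : ℕ+ => f m n)]
        ring
    _ = ∑' n : ℕ+, (∑' m : ℕ+, f m n - ∑' m : ℕ+, f m (-n)) :=
        (h_pos.prod_symm.prod.tsum_sub h_mixed.prod_symm.prod).symm
    _ = ∑' (n : ℕ+) (m : ℤ), f m n := tsum_congr fun n => (h_row n).symm

theorem tsum_int_sub_succ_eq_zero {f : ℤ → ℝ} (hf : Tendsto f cofinite (𝓝 0))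
    (hs : Summable fun m => f m - f (m + 1)) : ∑' m, (f m - f (m + 1)) = 0 := by
  have h_sums : Tendsto (fun N : ℕ => f (-N) - f N) atTop (𝓝 (∑' m, (f m - f (m + 1)))) := by
    simpa only [Function.comp_def, Finset.sum_Ico_int_sub] using!
      hs.hasSum.comp (Finset.tendsto_Ico_neg (R := ℤ))
  have h_top : Tendsto (fun N : ℕ => f N) atTop (𝓝 0) :=
    hf.comp (Nat.cofinite_eq_atTop ▸ Nat.cast_injective.tendsto_cofinite)
  have h_bot : Tendsto (fun N : ℕ => f (-N)) atTop (𝓝 0) :=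
    hf.comp (Nat.cofinite_eq_atTop ▸ (neg_injective.comp Nat.cast_injective).tendsto_cofinite)
  exact tendsto_nhds_unique h_sums (by simpa using h_bot.sub h_top)

end Series

section SimplePoles

theorem summable_int_inv_add_sub_inv (a : ℝ) :
    Summable fun m : ℤ => ((m : ℝ) + a)⁻¹ - (m : ℝ)⁻¹ := by
  have h_sq (b : ℝ) : Summable fun m : ℤ => (((m : ℝ) + b)⁻¹) ^ 2 := by
    simpa using (Real.summable_one_div_int_add_rpow b 2).mpr one_lt_two
  have h_ne (b : ℝ) : ∀ᶠ m : ℤ in cofinite, (m : ℝ) + b ≠ 0 := by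
    have h_inj : Function.Injective fun m : ℤ => (m : ℝ) + b :=
      (add_left_injective b).comp Int.cast_injective
    exact h_inj.tendsto_cofinite (Set.finite_singleton 0).compl_mem_cofinite
  refine (((h_sq a).add (h_sq 0)).mul_left |a|).of_norm_bounded_eventually ?_
  filter_upwards [h_ne a, h_ne 0] with m hma hm
  rw [add_zero] at hm ⊢
  calc ‖((m : ℝ) + a)⁻¹ - (m : ℝ)⁻¹‖ = ‖-a * (((m : ℝ) + a)⁻¹ * (m : ℝ)⁻¹)‖ := by
        congr 1
        field_simp
        ring
    _ = |a| * |((m : ℝ) + a)⁻¹ * (m : ℝ)⁻¹| := by rw [norm_mul, norm_neg]; rfl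
    _ ≤ |a| * ((((m : ℝ) + a)⁻¹) ^ 2 + ((m : ℝ)⁻¹) ^ 2) := by
        gcongr
        exact abs_le.mpr ⟨by nlinarith [sq_nonneg (((m : ℝ) + a)⁻¹ + (m : ℝ)⁻¹)],
          by nlinarith [sq_nonneg (((m : ℝ) + a)⁻¹ - (m : ℝ)⁻¹)]⟩

theorem tendsto_int_inv_cofinite : Tendsto (fun m : ℤ => (m : ℝ)⁻¹) cofinite (𝓝 0) :=
  tendsto_inv₀_cobounded.comp <| by
    simpa only [Metric.cobounded_eq_cocompact] using Int.tendsto_coe_cofinite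

theorem tsum_int_inv_add_nat_sub_inv (k : ℕ) :
    ∑' m : ℤ, (((m : ℝ) + k)⁻¹ - (m : ℝ)⁻¹) = 0 := by
  induction k with
  | zero => simp
  | succ k ih =>
    have h_diff (m : ℤ) : ((m : ℝ) + k)⁻¹ - ((m + 1 : ℤ) + k : ℝ)⁻¹ =
        (((m : ℝ) + k)⁻¹ - (m : ℝ)⁻¹) - (((m : ℝ) + (k + 1 : ℕ))⁻¹ - (m : ℝ)⁻¹) := by
      push_cast
      ring_nf
    have h_tendsto : Tendsto (fun m : ℤ => ((m : ℝ) + k)⁻¹) cofinite (𝓝 0) := by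
      simpa [Function.comp_def] using tendsto_int_inv_cofinite.comp
        (add_left_injective (k : ℤ)).tendsto_cofinite
    have h_summable := (summable_int_inv_add_sub_inv k).sub
      (summable_int_inv_add_sub_inv (k + 1 : ℕ))
    have h_telescope := tsum_int_sub_succ_eq_zero h_tendsto
      (h_summable.congr fun m => (h_diff m).symm)
    rw [tsum_congr h_diff, (summable_int_inv_add_sub_inv k).tsum_sub
      (summable_int_inv_add_sub_inv (k + 1 : ℕ)), ih, zero_sub, neg_eq_zero] at h_telescope
    exact h_telescope

theorem tsum_int_inv_add_sub_inv {k : ℕ} {a : ℝ} (ha : 2 * a = k) :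
    ∑' m : ℤ, (((m : ℝ) + a)⁻¹ - (m : ℝ)⁻¹) = 0 := by
  have h_centred : ∑' m : ℤ, (((m : ℝ) + a)⁻¹ - (m : ℝ)⁻¹
      - 1 / 2 * (((m : ℝ) + k)⁻¹ - (m : ℝ)⁻¹)) = 0 := by
    refine tsum_eq_zero_of_comp_equiv_eq_neg_s17 (Equiv.subLeft (-(k : ℤ))) fun m => ?_
    simp only [Equiv.subLeft_apply]
    push_cast
    rw [← ha, show -(2 * a) - (m : ℝ) + a = -(m + a) by ring,
      show -(2 * a) - (m : ℝ) + 2 * a = -m by ring, show -(2 * a) - (m : ℝ) = -(m + 2 * a) by ring]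
    simp only [inv_neg]
    ring
  rwa [(summable_int_inv_add_sub_inv a).tsum_sub ((summable_int_inv_add_sub_inv k).mul_left _),
    tsum_mul_left, tsum_int_inv_add_nat_sub_inv, mul_zero, sub_zero] at h_centred

end SimplePoles

section ZetaValues

theorem ofReal_re_riemannZeta_ofReal (x : ℝ) : ((riemannZeta x).re : ℂ) = riemannZeta x := by
  rw [← Complex.conj_eq_iff_re, ← riemannZeta_conj, Complex.conj_ofReal]

theorem hasSum_pnat_inv_pow {k : ℕ} (hk : 1 < k) :
    HasSum (fun n : ℕ+ => ((n : ℝ) ^ k)⁻¹) (riemannZeta k).re := by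
  have h_nat : HasSum (fun n : ℕ => ((n : ℝ) ^ k)⁻¹) (riemannZeta k).re := by
    convert! (Real.summable_nat_pow_inv.mpr hk).hasSum
    rw [zeta_nat_eq_tsum_of_gt_one hk, ← Complex.ofReal_re (∑' n : ℕ, _)]
    push_cast
    simp only [one_div]
  exact (hasSum_pnat_iff (f := fun n : ℕ => ((n : ℝ) ^ k)⁻¹)).mpr <| by
    simpa [show k ≠ 0 by lia] using h_nat

theorem hasSum_pnat_ite_even_inv_pow {k : ℕ} (hk : 1 < k) :
    HasSum (fun n : ℕ+ => if Even (n : ℕ) then ((n : ℝ) ^ k)⁻¹ else 0)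
      ((2 ^ k)⁻¹ * (riemannZeta k).re) := by
  have h_inj : Function.Injective fun n : ℕ+ => 2 * n := fun a b hab => mul_left_cancel hab
  rw [← h_inj.hasSum_iff]
  · convert! (hasSum_pnat_inv_pow hk).mul_left ((2 ^ k)⁻¹) using 2 with n
    simp [mul_pow, mul_comm]
  · intro n hn
    refine if_neg fun h_even => hn ?_
    obtain ⟨j, hj⟩ := even_iff_two_dvd.mp h_even
    exact ⟨⟨j, by have := n.pos; lia⟩, PNat.eq hj.symm⟩

theorem summable_int_inv_pow {k : ℕ} (hk : 1 < k) : Summable fun m : ℤ => ((m : ℝ) ^ k)⁻¹ := by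
  simpa only [one_div] using Real.summable_one_div_int_pow.mpr hk

theorem hasSum_int_inv_pow_of_even {k : ℕ} (hk : 1 < k) (h_even : Even k) :
    HasSum (fun m : ℤ => ((m : ℝ) ^ k)⁻¹) (2 * (riemannZeta k).re) := by
  have h_tsum : ∑' m : ℤ, ((m : ℝ) ^ k)⁻¹ = 2 * (riemannZeta k).re := by
    rw [← Complex.re_ofReal_mul 2, Complex.ofReal_ofNat,
      two_mul_riemannZeta_eq_tsum_int_inv_pow_of_even hk h_even,
      ← Complex.ofReal_re (∑' m : ℤ, _)]
    push_cast
    rfl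
  exact h_tsum ▸ (summable_int_inv_pow hk).hasSum

theorem hasSum_int_inv_pow_of_odd {k : ℕ} (hk : 1 < k) (h_odd : Odd k) :
    HasSum (fun m : ℤ => ((m : ℝ) ^ k)⁻¹) 0 := by
  have h_zero : ∑' m : ℤ, ((m : ℝ) ^ k)⁻¹ = 0 :=
    tsum_eq_zero_of_comp_equiv_eq_neg_s17 (Equiv.neg ℤ) fun m => by simp [h_odd.neg_pow, inv_neg]
  exact h_zero ▸ (summable_int_inv_pow hk).hasSum

end ZetaValues

section ScaledLattice

variable (n : ℕ+)

theorem hasSum_int_comp_div_add_int {f : ℝ → ℝ} {s : ℝ} (k : ℤ)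
    (h : HasSum (fun m : ℤ => f (m / n)) s) : HasSum (fun m : ℤ => f (m / n + k)) s := by
  convert! (Equiv.addRight (k * n : ℤ)).hasSum_iff.mpr h using 2 with m
  simp [add_div]

theorem hasSum_int_inv_div_pow {k : ℕ} {s : ℝ} (h : HasSum (fun m : ℤ => ((m : ℝ) ^ k)⁻¹) s) :
    HasSum (fun m : ℤ => (((m : ℝ) / n) ^ k)⁻¹) (n ^ k * s) := by
  simp only [div_pow, inv_div]
  exact h.mul_left ((n : ℝ) ^ k)

theorem hasSum_int_inv_div_add_sub_inv {k : ℕ} {a : ℝ} (ha : 2 * a = k) :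
    HasSum (fun m : ℤ => ((m : ℝ) / n + a)⁻¹ - ((m : ℝ) / n)⁻¹) 0 := by
  have h_zero : ∑' m : ℤ, (((m : ℝ) + n * a)⁻¹ - (m : ℝ)⁻¹) = 0 :=
    tsum_int_inv_add_sub_inv (k := n * k) (by push_cast; rw [← ha]; ring)
  convert! (h_zero ▸ (summable_int_inv_add_sub_inv (n * a)).hasSum).mul_left (n : ℝ) using 2 with m
  · rw [show (m : ℝ) / n + a = (m + n * a) / n by field_simp, inv_div, inv_div]
    ring
  · simp

theorem hasSum_int_ite_div_eq {a : ℝ} {k : ℤ} (ha : a * n = k) (c : ℝ) :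
    HasSum (fun m : ℤ => if (m : ℝ) / n = a then c else 0) c := by
  convert! hasSum_ite_eq k c using 3 with m
  rw [div_eq_iff (by simp), ha, Int.cast_inj]

theorem hasSum_int_ite_div_eq_neg_three_halves (c : ℝ) :
    HasSum (fun m : ℤ => if (m : ℝ) / n = -3 / 2 then c else 0)
      (if Even (n : ℕ) then c else 0) := by
  split_ifs with h_even
  · obtain ⟨j, hj⟩ := h_even
    refine hasSum_int_ite_div_eq n (k := -3 * j) ?_ c
    rw [hj]
    push_cast
    ring
  · convert! hasSum_zero using 2 with m
    refine if_neg fun h => h_even ?_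
    have h_int : 2 * m = -3 * n := by
      rw [div_eq_iff (by simp)] at h
      exact_mod_cast (by linarith : (2 * m : ℝ) = -3 * n)
    rw [Nat.even_iff]
    lia

end ScaledLattice

section Summand

/-- The summand of `zetaG2`, as a function on the plane. -/
noncomputable def g2Summand (s₁ s₂ s₃ s₄ s₅ s₆ : ℕ) (x y : ℝ) : ℝ :=
  1 / (x ^ s₁ * y ^ s₂ * (x + y) ^ s₃ * (x + 2 * y) ^ s₄ * (x + 3 * y) ^ s₅ * (2 * x + 3 * y) ^ s₆)

theorem g2Summand_mul_mul (s₁ s₂ s₃ s₄ s₅ s₆ : ℕ) (c x y : ℝ) :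
    g2Summand s₁ s₂ s₃ s₄ s₅ s₆ (c * x) (c * y) =
      (c ^ (s₁ + s₂ + s₃ + s₄ + s₅ + s₆))⁻¹ * g2Summand s₁ s₂ s₃ s₄ s₅ s₆ x y := by
  simp only [g2Summand, mul_left_comm _ c, ← mul_add, mul_pow, pow_add, one_div, mul_inv]
  ring

variable {s₁ s₂ s₃ s₄ s₅ s₆ : ℕ}

theorem g2Summand_zero_left (h : s₁ ≠ 0) (y : ℝ) : g2Summand s₁ s₂ s₃ s₄ s₅ s₆ 0 y = 0 := by
  simp [g2Summand, h]

theorem g2Summand_zero_right (h : s₂ ≠ 0) (x : ℝ) : g2Summand s₁ s₂ s₃ s₄ s₅ s₆ x 0 = 0 := by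
  simp [g2Summand, h]

theorem g2Summand_neg_sub (h : Odd s₄) (x y : ℝ) :
    g2Summand s₁ s₂ s₂ s₄ s₅ s₅ x (-x - y) = -g2Summand s₁ s₂ s₂ s₄ s₅ s₅ x y := by
  have h_sign (s : ℕ) : (-1 : ℝ) ^ s * (-1) ^ s = 1 := by simp [← mul_pow]
  have h_neg (s : ℕ) {u v : ℝ} (h_uv : u = -v) : u ^ s = (-1) ^ s * v ^ s := by
    rw [h_uv, neg_pow]
  simp only [g2Summand]
  rw [← one_div_neg_eq_neg_one_div, h_neg s₂ (neg_add' x y).symm,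
    h_neg s₂ (show x + (-x - y) = -y by ring),
    h_neg s₄ (show x + 2 * (-x - y) = -(x + 2 * y) by ring),
    h_neg s₅ (show x + 3 * (-x - y) = -(2 * x + 3 * y) by ring),
    h_neg s₅ (show 2 * x + 3 * (-x - y) = -(x + 3 * y) by ring), h.neg_one_pow]
  congr 1
  linear_combination (-(x ^ s₁ * y ^ s₂ * (x + y) ^ s₂ * (x + 2 * y) ^ s₄ * (x + 3 * y) ^ s₅
    * (2 * x + 3 * y) ^ s₅)) * ((-1) ^ s₅ * (-1) ^ s₅ * h_sign s₂ + h_sign s₅)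

theorem abs_g2Summand_intCast_le (m n : ℤ) :
    |g2Summand s₁ s₂ s₃ s₄ s₅ s₆ m n| ≤ |1 / (m : ℝ) ^ s₁| * |1 / (n : ℝ) ^ s₂| := by
  have h_le (k : ℤ) (s : ℕ) : |((k : ℝ) ^ s)⁻¹| ≤ 1 := by
    rcases eq_or_ne k 0 with rfl | hk
    · rcases eq_or_ne s 0 with rfl | hs <;> simp [*]
    · rw [abs_inv, abs_pow]
      exact inv_le_one_of_one_le₀ (one_le_pow₀ (mod_cast Int.one_le_abs hk))
  have h₃ := h_le (m + n) s₃
  have h₄ := h_le (m + 2 * n) s₄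
  have h₅ := h_le (m + 3 * n) s₅
  have h₆ := h_le (2 * m + 3 * n) s₆
  push_cast at h₃ h₄ h₅ h₆
  simp only [g2Summand, one_div, mul_inv, abs_mul]
  calc |((m : ℝ) ^ s₁)⁻¹| * |((n : ℝ) ^ s₂)⁻¹| * |(((m : ℝ) + n) ^ s₃)⁻¹|
        * |(((m : ℝ) + 2 * n) ^ s₄)⁻¹| * |(((m : ℝ) + 3 * n) ^ s₅)⁻¹|
        * |((2 * (m : ℝ) + 3 * n) ^ s₆)⁻¹|
      ≤ |((m : ℝ) ^ s₁)⁻¹| * |((n : ℝ) ^ s₂)⁻¹| * 1 * 1 * 1 * 1 := by gcongr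
    _ = |((m : ℝ) ^ s₁)⁻¹| * |((n : ℝ) ^ s₂)⁻¹| := by ring

theorem summable_g2Summand (h₁ : 1 < s₁) (h₂ : 1 < s₂) :
    Summable fun p : ℤ × ℤ => g2Summand s₁ s₂ s₃ s₄ s₅ s₆ p.1 p.2 := by
  refine Summable.of_norm_bounded ?_ fun p => abs_g2Summand_intCast_le p.1 p.2
  exact (Real.summable_one_div_int_pow.mpr h₁).abs.mul_of_nonneg
    (Real.summable_one_div_int_pow.mpr h₂).abs (fun _ => abs_nonneg _) fun _ => abs_nonneg _

theorem two_mul_zetaG2_eq_tsum_pnat_tsum_int (h₁ : 1 < s₁) (h₂ : 1 < s₂) (h_even : Even s₁)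
    (h_odd : Odd s₄) :
    2 * zetaG2 s₁ s₂ s₂ s₄ s₅ s₅ =
      ∑' (n : ℕ+) (m : ℤ), g2Summand s₁ s₂ s₂ s₄ s₅ s₅ m n := by
  have h_weight : Odd (s₁ + s₂ + s₂ + s₄ + s₅ + s₅) := by
    grind
  exact_mod_cast two_mul_tsum_pnat_eq_tsum_pnat_tsum_int
    (f := fun m n => g2Summand s₁ s₂ s₂ s₄ s₅ s₅ m n) (summable_g2Summand h₁ h₂)
    (fun n => by simpa using g2Summand_zero_left (by lia) (n : ℝ))
    (fun m => by simpa using g2Summand_zero_right (by lia) (m : ℝ))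
    (fun m n => by
      simpa [h_weight.neg_one_pow] using
        g2Summand_mul_mul s₁ s₂ s₂ s₄ s₅ s₅ (-1) m n)
    (fun m n => by simpa using g2Summand_neg_sub h_odd (m : ℝ) n)

end Summand

section Rows

/-- The partial fraction expansion in `t` of the rational function `g2Summand 4 2 2 1 1 1 t 1`.
Its residues add up to zero, so each simple pole is paired with one at `0`. -/
noncomputable def g2PartialFractions (t : ℝ) : ℝ :=
  1 / 18 * (t ^ 4)⁻¹ - 7 / 36 * (t ^ 3)⁻¹ + 271 / 648 * (t ^ 2)⁻¹ + 1 / 2 * ((t + 1) ^ 2)⁻¹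
    + 1 / 4 * ((t + 1)⁻¹ - t⁻¹) - 1 / 16 * ((t + 2)⁻¹ - t⁻¹) + 1 / 972 * ((t + 3)⁻¹ - t⁻¹)
    + 128 / 243 * ((t + 3 / 2)⁻¹ - t⁻¹)

/-- The function that agrees with `g2PartialFractions` at its poles, evaluated with `0⁻¹ = 0`,
and vanishes elsewhere. -/
noncomputable def g2PoleCorrection (t : ℝ) : ℝ :=
  (if t = 0 then 24967 / 23328 else 0) + (if t = -1 then 19 / 8 else 0)
    + (if t = -2 then -5 / 16 else 0) + (if t = -3 then 1 / 243 else 0)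
    + (if t = -3 / 2 then 512 / 243 else 0)

theorem g2Summand_422111_one_right (t : ℝ) :
    g2Summand 4 2 2 1 1 1 t 1 = g2PartialFractions t - g2PoleCorrection t := by
  by_cases h_pole : t = 0 ∨ t = -1 ∨ t = -2 ∨ t = -3 ∨ t = -3 / 2
  · rcases h_pole with rfl | rfl | rfl | rfl | rfl <;>
      norm_num [g2Summand, g2PartialFractions, g2PoleCorrection]
  · push Not at h_pole
    obtain ⟨h_zero, h_one, h_two, h_three, h_half⟩ := h_pole
    have h_add_one : t + 1 ≠ 0 := fun h => h_one (by linarith)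
    have h_add_two : t + 2 ≠ 0 := fun h => h_two (by linarith)
    have h_add_three : t + 3 ≠ 0 := fun h => h_three (by linarith)
    have h_two_mul_add_three : t * 2 + 3 ≠ 0 := fun h => h_half (by linarith)
    have h_correction : g2PoleCorrection t = 0 := by
      simp only [g2PoleCorrection, h_zero, h_one, h_two, h_three, h_half, if_false, add_zero]
    rw [h_correction, sub_zero, g2Summand, g2PartialFractions]
    field_simp
    ring

variable (n : ℕ+)

theorem hasSum_int_g2PartialFractions :
    HasSum (fun m : ℤ => g2PartialFractions (m / n))
      (1 / 9 * (riemannZeta 4).re * n ^ 4 + 595 / 324 * (riemannZeta 2).re * n ^ 2) := by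
  have h_even {k : ℕ} (hk : 1 < k) (h : Even k) :=
    hasSum_int_inv_div_pow n (hasSum_int_inv_pow_of_even hk h)
  have h_four := h_even (k := 4) (by simp) (by decide)
  have h_three :=
    hasSum_int_inv_div_pow n (hasSum_int_inv_pow_of_odd (k := 3) (by simp) (by decide))
  have h_two := h_even (k := 2) (by simp) (by decide)
  have h_shift := hasSum_int_comp_div_add_int n (f := fun t => (t ^ 2)⁻¹) 1 h_two
  have h_one (k : ℕ) {a : ℝ} (ha : 2 * a = k) := hasSum_int_inv_div_add_sub_inv n ha
  convert! (((((((h_four.mul_left (1 / 18)).sub (h_three.mul_left (7 / 36))).add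
    (h_two.mul_left (271 / 648))).add (h_shift.mul_left (1 / 2))).add
    ((h_one 2 (a := 1) (by norm_num)).mul_left (1 / 4))).sub
    ((h_one 4 (a := 2) (by norm_num)).mul_left (1 / 16))).add
    ((h_one 6 (a := 3) (by norm_num)).mul_left (1 / 972))).add
    ((h_one 3 (a := 3 / 2) (by norm_num)).mul_left (128 / 243)) using 1
  · simp [g2PartialFractions]
  · push_cast
    ring

theorem hasSum_int_g2PoleCorrection :
    HasSum (fun m : ℤ => g2PoleCorrection (m / n))
      (24967 / 23328 + 19 / 8 + -5 / 16 + 1 / 243 + if Even (n : ℕ) then 512 / 243 else 0) := by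
  have h_int {a : ℝ} (k : ℤ) (ha : a * n = k) (c : ℝ) := hasSum_int_ite_div_eq n ha c
  exact ((((h_int 0 (by simp) _).add (h_int (-n) (by simp) _)).add
    (h_int (-2 * n) (by simp) _)).add (h_int (-3 * n) (by simp) _)).add
    (hasSum_int_ite_div_eq_neg_three_halves n _)

theorem tsum_int_g2Summand_422111 :
    ∑' m : ℤ, g2Summand 4 2 2 1 1 1 m n =
      1 / 9 * (riemannZeta 4).re * ((n : ℝ) ^ 7)⁻¹
        + 595 / 324 * (riemannZeta 2).re * ((n : ℝ) ^ 9)⁻¹ - 73177 / 23328 * ((n : ℝ) ^ 11)⁻¹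
        - 512 / 243 * if Even (n : ℕ) then ((n : ℝ) ^ 11)⁻¹ else 0 := by
  have h_scale (m : ℤ) : g2Summand 4 2 2 1 1 1 m n =
      ((n : ℝ) ^ 11)⁻¹ * (g2PartialFractions (m / n) - g2PoleCorrection (m / n)) := by
    have h_mul := g2Summand_mul_mul 4 2 2 1 1 1 (n : ℝ) (m / n) 1
    rwa [mul_one, mul_div_cancel₀ _ (by simp), g2Summand_422111_one_right] at h_mul
  have h_sum := ((hasSum_int_g2PartialFractions n).sub (hasSum_int_g2PoleCorrection n)).mul_left
    (((n : ℝ) ^ 11)⁻¹)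
  rw [tsum_congr h_scale, h_sum.tsum_eq]
  split_ifs <;> field_simp <;> ring

theorem two_mul_zetaG2_422111 :
    2 * zetaG2 4 2 2 1 1 1 = 1 / 9 * (riemannZeta 4).re * (riemannZeta 7).re
      + 595 / 324 * (riemannZeta 2).re * (riemannZeta 9).re
      - 73201 / 23328 * (riemannZeta 11).re := by
  have h_seven := hasSum_pnat_inv_pow (k := 7) (by simp)
  have h_nine := hasSum_pnat_inv_pow (k := 9) (by simp)
  have h_eleven := hasSum_pnat_inv_pow (k := 11) (by simp)
  have h_even := hasSum_pnat_ite_even_inv_pow (k := 11) (by simp)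
  push_cast at h_seven h_nine h_eleven h_even
  have h_rows := (((h_seven.mul_left (1 / 9 * (riemannZeta 4).re)).add
    (h_nine.mul_left (595 / 324 * (riemannZeta 2).re))).sub
    (h_eleven.mul_left (73177 / 23328))).sub (h_even.mul_left (512 / 243))
  rw [two_mul_zetaG2_eq_tsum_pnat_tsum_int (by simp) (by simp) (by decide) (by decide),
    tsum_congr tsum_int_g2Summand_422111, h_rows.tsum_eq]
  ring

end Rows

theorem zetaG2_422111 :
    (zetaG2 4 2 2 1 1 1 : ℂ) =
      (1 / 18) * riemannZeta 4 * riemannZeta 7 + (595 / 648) * riemannZeta 2 * riemannZeta 9 - (73201 / 46656) * riemannZeta 11 := by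
  have h_real (k : ℕ) : ((riemannZeta k).re : ℂ) = riemannZeta k :=
    mod_cast ofReal_re_riemannZeta_ofReal k
  have h_value := congrArg (fun x : ℝ => (x : ℂ)) two_mul_zetaG2_422111
  have h_two := h_real 2
  have h_four := h_real 4
  have h_seven := h_real 7
  have h_nine := h_real 9
  have h_eleven := h_real 11
  push_cast at h_value h_two h_four h_seven h_nine h_eleven
  rw [h_two, h_four, h_seven, h_nine, h_eleven] at h_value
  linear_combination h_value / 2
end
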